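/- Let f : A → B be a continuous map of topological spaces, where B is a finite simplicial complex and every homotopy fiber of f is homotopy equivalent to a finite simplicial complex. Then there exist a compact ENR E, a homotopy equivalence φ : A → E, and an approximate fibration p : E → B with p ∘ φ = f. -/

import Mathlib

noncomputable section

open unitInterval

/-- A map `p : E → B` is a (Hurewicz) fibration if it is continuous and has the homotopy
lifting property with respect to every topological space. -/
def IsHurewiczFibration {E B : Type} [TopologicalSpace E] [TopologicalSpace B]
    (p : E → B) : Prop :=
  Continuous p ∧
  ∀ (X : Type) [TopologicalSpace X] (f : C(X, E)) (h : C(X × I, B)),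
    (∀ x : X, h (x, 0) = p (f x)) →
    ∃ H : C(X × I, E), (∀ x : X, H (x, 0) = f x) ∧ (∀ z : X × I, p (H z) = h z)

/-- A map `p : E → B` is an approximate fibration if it is continuous and, for every space `X`,
every partial lift and every open cover `𝒰` of `B`, there is a lift of the homotopy which
commutes with the given homotopy "up to `𝒰`". -/
def IsApproxFibration {E B : Type} [TopologicalSpace E] [TopologicalSpace B]
    (p : E → B) : Prop :=
  Continuous p ∧
  ∀ (X : Type) [TopologicalSpace X] (f : C(X, E)) (h : C(X × I, B)),
    (∀ x : X, h (x, 0) = p (f x)) →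
    ∀ 𝒰 : Set (Set B), (∀ U ∈ 𝒰, IsOpen U) → (⋃₀ 𝒰 = Set.univ) →
    ∃ H : C(X × I, E), (∀ x : X, H (x, 0) = f x) ∧
      (∀ z : X × I, ∃ U ∈ 𝒰, p (H z) ∈ U ∧ h z ∈ U)

/-- A topological space is a Euclidean neighborhood retract: it is homeomorphic to a subspace
`X'` of some `ℝⁿ` which is a retract of an open neighborhood `U` of `X'` in `ℝⁿ`. -/
def IsENR (X : Type) [TopologicalSpace X] : Prop :=
  ∃ (n : ℕ) (X' : Set (Fin n → ℝ)), Nonempty (X ≃ₜ X') ∧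
    ∃ U : Set (Fin n → ℝ), IsOpen U ∧ X' ⊆ U ∧
      ∃ r : C(U, X'), ∀ (x : U) (hx : (x : Fin n → ℝ) ∈ X'), r x = ⟨(x : Fin n → ℝ), hx⟩

/-- A space is (homeomorphic to) the polyhedron of a finite geometric simplicial complex
in some Euclidean space. -/
def IsFiniteSimplicialComplex (B : Type) [TopologicalSpace B] : Prop :=
  ∃ (n : ℕ) (K : Geometry.SimplicialComplex ℝ (Fin n → ℝ)),
    K.faces.Finite ∧ Nonempty (B ≃ₜ K.space)

/-- `X` is homotopy equivalent to (the polyhedron of) a finite simplicial complex. -/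
def HomotopyEquivToFiniteComplex (X : Type) [TopologicalSpace X] : Prop :=
  ∃ (n : ℕ) (K : Geometry.SimplicialComplex ℝ (Fin n → ℝ)),
    K.faces.Finite ∧ Nonempty (ContinuousMap.HomotopyEquiv X K.space)

/-- The homotopy fiber of `f : A → B` over `b`: pairs `(a, γ)` of a point of `A` and a path
`γ : [0,1] → B` (with the compact-open topology) with `γ(0) = f(a)` and `γ(1) = b`. -/
def HomotopyFiber {A B : Type} [TopologicalSpace A] [TopologicalSpace B]
    (f : A → B) (b : B) : Type :=
  {z : A × C(I, B) // z.2 0 = f z.1 ∧ z.2 1 = b}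

instance {A B : Type} [TopologicalSpace A] [TopologicalSpace B] (f : A → B) (b : B) :
    TopologicalSpace (HomotopyFiber f b) :=
  instTopologicalSpaceSubtype

namespace AFib

section framework
variable {X Y Z T S : Type} [TopologicalSpace X] [TopologicalSpace Y] [TopologicalSpace T]
  [TopologicalSpace S]

/-- Vertical homotopy relation. -/
def VH (c : Y → Z) (f g : C(X, Y)) : Prop :=
  ∃ K : C(X × I, Y), (∀ x, K (x, 0) = f x) ∧ (∀ x, K (x, 1) = g x) ∧
    ∀ x t, c (K (x, t)) = c (f x)

theorem VH.refl (c : Y → Z) (f : C(X, Y)) : VH c f f :=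
  ⟨f.comp ContinuousMap.fst, fun _ => rfl, fun _ => rfl, fun _ _ => rfl⟩

theorem VH.end_eq {c : Y → Z} {f g : C(X, Y)} (h : VH c f g) (x : X) : c (g x) = c (f x) := by
  obtain ⟨K, h0, h1, h2⟩ := h
  rw [← h1, h2]

theorem VH.symm {c : Y → Z} {f g : C(X, Y)} (h : VH c f g) : VH c g f := by
  have he := h.end_eq
  obtain ⟨K, h0, h1, h2⟩ := h
  refine ⟨K.comp ⟨fun z => (z.1, σ z.2), by fun_prop⟩, ?_, ?_, ?_⟩
  · intro x; simp [h1]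
  · intro x; simp [h0]
  · intro x t; simp [h2, he]

theorem VH.trans {c : Y → Z} {f g k : C(X, Y)} (h : VH c f g) (h' : VH c g k) : VH c f k := by
  have he := h.end_eq
  obtain ⟨K, h0, h1, h2⟩ := h
  obtain ⟨K', h0', h1', h2'⟩ := h'
  let H : ContinuousMap.Homotopy f g := ⟨K.comp ⟨fun z => (z.2, z.1), by fun_prop⟩, by simp [h0], by simp [h1]⟩
  let H' : ContinuousMap.Homotopy g k := ⟨K'.comp ⟨fun z => (z.2, z.1), by fun_prop⟩, by simp [h0'], by simp [h1']⟩
  refine ⟨(H.trans H').toContinuousMap.comp ⟨fun z => (z.2, z.1), by fun_prop⟩, ?_, ?_, ?_⟩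
  · intro x; simp
  · intro x; simp
  · intro x t
    change c ((H.trans H') (t, x)) = _
    rw [ContinuousMap.Homotopy.trans_apply]
    split_ifs
    · exact h2 _ _
    · exact (h2' _ _).trans (he x)

theorem VH.of_eq {c : Y → Z} {f g : C(X, Y)} (h : ∀ x, f x = g x) : VH c f g := by
  have : f = g := by ext x; exact h x
  subst this; exact VH.refl _ _

theorem VH.comp_left {c : Y → Z} {c' : T → Z} {f g : C(X, Y)} (h : VH c f g) (φ : C(Y, T))
    (hφ : ∀ y, c' (φ y) = c y) : VH c' (φ.comp f) (φ.comp g) := by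
  obtain ⟨K, h0, h1, h2⟩ := h
  exact ⟨φ.comp K, fun x => by simp [h0], fun x => by simp [h1], fun x t => by simp [hφ, h2]⟩

theorem VH.comp_right {c : Y → Z} {f g : C(X, Y)} (h : VH c f g) (φ : C(T, X)) :
    VH c (f.comp φ) (g.comp φ) := by
  obtain ⟨K, h0, h1, h2⟩ := h
  exact ⟨K.comp ⟨fun z => (φ z.1, z.2), by fun_prop⟩, fun x => by simp [h0],
    fun x => by simp [h1], fun x t => by simp [h2]⟩

/-- Fibre homotopy equivalence over `Z`. -/
def FHE (p : X → Z) (q : Y → Z) (φ : C(X, Y)) : Prop :=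
  (∀ x, q (φ x) = p x) ∧ ∃ ψ : C(Y, X), (∀ y, p (ψ y) = q y) ∧
    VH p (ψ.comp φ) (ContinuousMap.id X) ∧ VH q (φ.comp ψ) (ContinuousMap.id Y)

theorem FHE.exists_inv {p : X → Z} {q : Y → Z} {φ : C(X, Y)} (h : FHE p q φ) :
    ∃ ψ : C(Y, X), FHE q p ψ ∧ 
    VH p (ψ.comp φ) (ContinuousMap.id X) ∧ VH q (φ.comp ψ) (ContinuousMap.id Y) := by
  obtain ⟨h, ψ, a, b, c⟩ := h
  exact ⟨ψ, ⟨a, φ, h, c, b⟩, b, c⟩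

theorem FHE.comp {p : X → Z} {q : Y → Z} {r : T → Z} {φ : C(X, Y)} {χ : C(Y, T)}
    (h' : FHE q r χ) (h : FHE p q φ) : FHE p r (χ.comp φ) := by
  obtain ⟨h1, ψ, a, b, c⟩ := h
  obtain ⟨h1', ψ', a', b', c'⟩ := h'
  refine ⟨fun x => by simp [h1, h1'], ψ.comp ψ', fun y => by simp [a, a'], ?_, ?_⟩
  · have := ((b'.comp_right φ).comp_left ψ a)
    exact this.trans b
  · have := ((c.comp_right ψ').comp_left χ h1')
    exact this.trans c'

theorem FHE.congr {p : X → Z} {q : Y → Z} {φ φ' : C(X, Y)} (h : FHE p q φ) (e : VH q φ φ') :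
    FHE p q φ' := by
  have he := e.end_eq
  obtain ⟨h1, ψ, a, b, c⟩ := h
  refine ⟨fun x => by rw [he, h1], ψ, a, ?_, ?_⟩
  · exact (e.comp_left ψ a).symm.trans b
  · exact (e.comp_right ψ).symm.trans c

/-- two out of three -/
theorem FHE.of_comp_left {p : X → Z} {q : Y → Z} {r : T → Z} {φ : C(X, Y)} {χ : C(Y, T)}
    (hc : FHE p r (χ.comp φ)) (h' : FHE q r χ) (hφ : ∀ x, q (φ x) = p x) : FHE p q φ := by
  obtain ⟨ψ, h1, h2, h3⟩ := h'.exists_inv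
  have := h1.comp hc
  exact this.congr ((h2.comp_right φ))

theorem FHE.of_comp_right {p : X → Z} {q : Y → Z} {r : T → Z} {φ : C(X, Y)} {χ : C(Y, T)}
    (hc : FHE p r (χ.comp φ)) (h' : FHE p q φ) (hφ : ∀ x, r (χ x) = q x) : FHE q r χ := by
  obtain ⟨ψ, h1, h2, h3⟩ := h'.exists_inv
  have := hc.comp h1
  exact this.congr ((h3.comp_left χ hφ))

theorem FHE.of_inv {p : X → Z} {q : Y → Z} (φ : C(X, Y)) (ψ : C(Y, X)) 
    (h : ∀ x, q (φ x) = p x) (h1 : ∀ x, ψ (φ x) = x) (h2 : ∀ x, φ (ψ x) = x) : FHE p q φ :=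
  ⟨h, ψ, fun y => by rw [← h, h2], VH.of_eq (by simp [h1]), VH.of_eq (by simp [h2])⟩

/-- restriction of a map over `Z` to a subset -/
def res {p : X → Z} {q : Y → Z} (φ : C(X, Y)) (h : ∀ x, q (φ x) = p x) (U : Set Z) :
    C({x // p x ∈ U}, {y // q y ∈ U}) :=
  ⟨fun x => ⟨φ x.1, by rw [h]; exact x.2⟩, by fun_prop⟩

theorem VH.res {p : X → Z} {q : Y → Z} {φ φ' : C(X, Y)} (h : ∀ x, q (φ x) = p x)
    (h' : ∀ x, q (φ' x) = p x) (e : VH q φ φ') (U : Set Z) :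
    VH (fun y => q y.1) (res φ h U) (AFib.res φ' h' U) := by
  obtain ⟨K, h0, h1, h2⟩ := e
  refine ⟨⟨fun z => ⟨K (z.1.1, z.2), by rw [h2, h]; exact z.1.2⟩, by fun_prop⟩, ?_, ?_, ?_⟩
  · intro x; exact Subtype.ext (h0 x)
  · intro x; exact Subtype.ext (h1 x)
  · intro x t; exact h2 _ _

theorem FHE.res {p : X → Z} {q : Y → Z} {φ : C(X, Y)} (h : FHE p q φ) (U : Set Z) :
    FHE (fun x => p x.1) (fun y => q y.1) (res φ h.1 U) := by
  obtain ⟨h1, ψ, a, b, c⟩ := h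
  refine ⟨fun x => h1 _, AFib.res ψ a U, fun x => a _, ?_, ?_⟩
  · have := VH.res (p := p) (q := p) (φ := ψ.comp φ) (φ' := ContinuousMap.id X)
      (fun x => by simp [a, h1]) (fun x => rfl) b U
    exact this
  · have := VH.res (p := q) (q := q) (φ := φ.comp ψ) (φ' := ContinuousMap.id Y)
      (fun x => by simp [a, h1]) (fun x => rfl) c U
    exact this

/-- gluing of continuous maps on two closed pieces -/
theorem glue2 (P Q : X → Prop) (hP : IsClosed {x | P x}) (hQ : IsClosed {x | Q x})
    (hc : ∀ x, P x ∨ Q x) (f : C({x // P x}, Y)) (g : C({x // Q x}, Y))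
    (ha : ∀ x hp hq, f ⟨x, hp⟩ = g ⟨x, hq⟩) :
    ∃ F : C(X, Y), (∀ x h, F x = f ⟨x, h⟩) ∧ (∀ x h, F x = g ⟨x, h⟩) := by
  classical
  let F : X → Y := fun x => if h : P x then f ⟨x, h⟩ else g ⟨x, (hc x).resolve_left h⟩
  have h1 : ∀ x h, F x = f ⟨x, h⟩ := fun x h => by simp [F, h]
  have h2 : ∀ x h, F x = g ⟨x, h⟩ := fun x h => by
    by_cases hp : P x
    · rw [h1 x hp, ha]
    · simp [F, hp]
  have cF : Continuous F := by
    rw [continuous_iff_isClosed]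
    intro s hs
    have : F ⁻¹' s = (Subtype.val '' (f ⁻¹' s)) ∪ (Subtype.val '' (g ⁻¹' s)) := by
      ext x
      constructor
      · intro hx
        rcases hc x with h | h
        · left; exact ⟨⟨x, h⟩, by simpa [← h1 x h] using hx, rfl⟩
        · right; exact ⟨⟨x, h⟩, by simpa [← h2 x h] using hx, rfl⟩
      · rintro (⟨⟨x, h⟩, hx, rfl⟩ | ⟨⟨x, h⟩, hx, rfl⟩)
        · simpa [h1 x h] using hx
        · simpa [h2 x h] using hx
    rw [this]
    exact (hP.isClosedEmbedding_subtypeVal.isClosedMap _ (hs.preimage f.continuous)).union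
      (hQ.isClosedEmbedding_subtypeVal.isClosedMap _ (hs.preimage g.continuous))
  exact ⟨⟨F, cF⟩, h1, h2⟩

/-- Homotopy lifting for homotopies vertical over `Z`. -/
def VHLP (π : X → Y) (c : Y → Z) : Prop :=
  ∀ (T : Type) [TopologicalSpace T] (f : C(T, X)) (h : C(T × I, Y)),
    (∀ x, h (x, 0) = π (f x)) → (∀ x t, c (h (x, t)) = c (h (x, 0))) →
    ∃ H : C(T × I, X), (∀ x, H (x, 0) = f x) ∧ ∀ z, π (H z) = h z

/-- uniqueness of lifts up to vertical homotopy -/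
theorem VHLP.unique {π : X → Y} {c : Y → Z} (hπ : VHLP π c) (H H' : C(T × I, X))
    (hπc : Continuous π)
    (e : ∀ z, π (H z) = π (H' z)) (hs : ∀ x, H (x, 0) = H' (x, 0))
    (hc : ∀ x t, c (π (H (x, t))) = c (π (H (x, 0)))) :
    VH π (H.comp ⟨fun x => (x, 1), by fun_prop⟩) (H'.comp ⟨fun x => (x, 1), by fun_prop⟩) := by
  -- concatenated path
  have cl1 : IsClosed {z : T × I | (z.2 : ℝ) ≤ 1/2} := isClosed_le (by fun_prop) (by fun_prop)
  have cl2 : IsClosed {z : T × I | 1/2 ≤ (z.2 : ℝ)} := isClosed_le (by fun_prop) (by fun_prop)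
  let m : T × I → I := fun z => ⟨|2 * (z.2 : ℝ) - 1|, abs_nonneg _, by
    have := z.2.2.1; have := z.2.2.2; rw [abs_le]; constructor <;> linarith⟩
  have cm : Continuous m := by fun_prop
  obtain ⟨Q, hQ1, hQ2⟩ := glue2 (X := T × I) (Y := X) (fun z => (z.2 : ℝ) ≤ 1/2)
    (fun z => 1/2 ≤ (z.2 : ℝ)) cl1 cl2 (fun z => le_total _ _)
    (H.comp ⟨fun z => (z.1.1, m z.1), by fun_prop⟩)
    (H'.comp ⟨fun z => (z.1.1, m z.1), by fun_prop⟩) (by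
      rintro ⟨x, t⟩ h1 h2
      have : m (x, t) = 0 := by
        apply Subtype.ext
        have : (t : ℝ) = 1/2 := le_antisymm h1 h2
        simp [m, this]
      simp [this, hs])
  have hQπ : ∀ z, π (Q z) = π (H (z.1, m z)) := by
    intro z
    rcases le_total (z.2 : ℝ) (1/2) with h | h
    · rw [hQ1 z h]; rfl
    · rw [hQ2 z h, e]; rfl
  obtain ⟨K, hK0, hK1⟩ := hπ (T × I) Q
    ⟨fun w => π (H (w.1.1, max (m w.1) w.2)), by fun_prop⟩ (by
      intro x; simp [hQπ]) (by
      intro x t; simp only [ContinuousMap.coe_mk]; rw [hc, hc (t := max _ _)])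
  have hm0 : ∀ x, m (x, 0) = 1 := fun x => by apply Subtype.ext; simp [m]
  have hm1 : ∀ x, m (x, 1) = 1 := fun x => by apply Subtype.ext; simp [m]; norm_num
  have maxone : ∀ s : I, max 1 s = 1 := fun s => max_eq_left s.2.2
  have maxone' : ∀ s : I, max s 1 = 1 := fun s => max_eq_right s.2.2
  refine VH.trans (g := K.comp ⟨fun x => ((x, 0), 1), by fun_prop⟩)
    ⟨K.comp ⟨fun z => ((z.1, 0), z.2), by fun_prop⟩, ?_, fun x => rfl, ?_⟩ ?_
  · intro x; simp only [ContinuousMap.comp_apply, ContinuousMap.coe_mk, hK0]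
    rw [hQ1 _ (by simp)]; simp [hm0]
  · intro x t; simp [hK1, hm0, maxone]
  refine VH.trans (g := K.comp ⟨fun x => ((x, 1), 1), by fun_prop⟩)
    ⟨K.comp ⟨fun z => ((z.1, z.2), 1), by fun_prop⟩, fun x => rfl, fun x => rfl, ?_⟩ ?_
  · intro x t; simp [hK1, hm0, maxone']
  apply VH.symm
  refine ⟨K.comp ⟨fun z => ((z.1, 1), z.2), by fun_prop⟩, ?_, fun x => rfl, ?_⟩
  · intro x; simp only [ContinuousMap.comp_apply, ContinuousMap.coe_mk, hK0]
    rw [hQ2 _ (by norm_num)]; simp [hm1]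
  · intro x t; simp [hK1, hm1, maxone, e]

/-- shrinkable maps -/
def Shr (π : C(X, Y)) : Prop :=
  ∃ s : C(Y, X), (∀ y, π (s y) = y) ∧ VH π (ContinuousMap.id X) (s.comp π)

theorem Shr.of_FHE {π : C(X, Y)} {c : Y → Z} (hπ : VHLP π c) (h : FHE (fun x => c (π x)) c π) :
    Shr π := by
  obtain ⟨h1, k, a, b, d⟩ := h
  obtain ⟨D, hD0, hD1, hD2⟩ := d
  obtain ⟨H, hH0, hH1⟩ := hπ Y k D (by intro x; simp [hD0]) (by intro x t; rw [hD2, hD0])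
  let s : C(Y, X) := H.comp ⟨fun x => (x, 1), by fun_prop⟩
  have hs : ∀ y, π (s y) = y := fun y => by simp [s, hH1, hD1]
  have hks : VH (fun x => c (π x)) k s := ⟨H, hH0, fun x => rfl, fun x t => by
    simp only [hH1, hD2]; rfl⟩
  have e : VH (fun x => c (π x)) (s.comp π) (ContinuousMap.id X) :=
    ((hks.comp_right π).symm).trans b
  obtain ⟨G, hG0, hG1, hG2⟩ := e
  refine ⟨s, hs, ?_⟩
  have := hπ.unique G ((s.comp π).comp G) π.continuous (fun z => by simp [hs])
    (fun x => by simp [hG0, hs]) (fun x t => by simp only [hG2, hG0])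
  refine (VH.of_eq ?_).trans (this.trans (VH.of_eq ?_))
  · intro x; simp [hG1]
  · intro x; simp [hG1]

end framework
end AFib

namespace AFib

section pathspace
variable {X Y Z T : Type} [TopologicalSpace X] [TopologicalSpace Y] [TopologicalSpace T]

/-- vertical mapping path space -/
def PS (g : C(X, Y)) (c : Y → Z) : Type :=
  {z : X × C(I, Y) // z.2 0 = g z.1 ∧ ∀ t, c (z.2 t) = c (z.2 0)}

instance (g : C(X, Y)) (c : Y → Z) : TopologicalSpace (PS g c) := instTopologicalSpaceSubtype

variable (g : C(X, Y)) (c : Y → Z)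

def PS.ev : C(PS g c × I, Y) :=
  ⟨fun z => z.1.1.2 z.2, by
    have h1 : Continuous (fun z : PS g c × I => z.1.1) := continuous_subtype_val.comp continuous_fst
    exact continuous_eval.comp (f := fun z : PS g c × I => (z.1.1.2, z.2))
      ((continuous_snd.comp h1).prodMk continuous_snd)⟩

def PS.proj : C(PS g c, Y) := (PS.ev g c).comp ⟨fun z => (z, 1), by fun_prop⟩

def PS.pr : C(PS g c, X) := ⟨fun z => z.1.1, continuous_fst.comp continuous_subtype_val⟩

/-- constructor of maps to the path space -/
def PS.mk {g : C(X, Y)} {c : Y → Z} (a : C(T, X)) (w : C(T × I, Y))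
    (h0 : ∀ x, w (x, 0) = g (a x))
    (hc : ∀ x t, c (w (x, t)) = c (w (x, 0))) : C(T, PS g c) :=
  ⟨fun x => ⟨(a x, w.curry x), h0 x, hc x⟩, by
    apply Continuous.subtype_mk
    exact a.continuous.prodMk w.curry.continuous⟩

theorem PS.ext' {z z' : PS g c} (h : PS.pr g c z = PS.pr g c z')
    (h' : ∀ t, PS.ev g c (z, t) = PS.ev g c (z', t)) : z = z' := by
  apply Subtype.ext
  apply Prod.ext h
  ext t; exact h' t

theorem PS.ev_zero (z : PS g c) : PS.ev g c (z, 0) = g (PS.pr g c z) := z.2.1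

theorem PS.ev_vert (z : PS g c) (t : I) : c (PS.ev g c (z, t)) = c (PS.ev g c (z, 0)) := z.2.2 t

theorem PS.vhlp : VHLP (PS.proj g c) c := by
  intro T _ f h h0 hv
  have cl1 : IsClosed {z : (T × I) × I | (z.2 : ℝ) * (1 + z.1.2) ≤ 1} :=
    isClosed_le (by fun_prop) (by fun_prop)
  have cl2 : IsClosed {z : (T × I) × I | 1 ≤ (z.2 : ℝ) * (1 + z.1.2)} :=
    isClosed_le (by fun_prop) (by fun_prop)
  have key : ∀ x, c (h (x, 0)) = c (g (PS.pr g c (f x))) := by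
    intro x
    rw [h0]; change c (PS.ev g c (f x, 1)) = _
    rw [PS.ev_vert g c, PS.ev_zero]
  obtain ⟨w, hw1, hw2⟩ := glue2 (X := (T × I) × I) (Y := Y) 
    (fun z => (z.2 : ℝ) * (1 + z.1.2) ≤ 1) (fun z => 1 ≤ (z.2 : ℝ) * (1 + z.1.2))
    cl1 cl2 (fun z => le_total _ _)
    ((PS.ev g c).comp ⟨fun z => (f z.1.1.1, ⟨(z.1.2 : ℝ) * (1 + z.1.1.2), by
      have := z.1.2.2.1; have := z.1.1.2.2.1; positivity, z.2⟩), by fun_prop⟩)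
    (h.comp ⟨fun z => (z.1.1.1, ⟨(z.1.2 : ℝ) * (1 + z.1.1.2) - 1, by linarith [z.2], by
      have := z.1.2.2.1; have := z.1.1.2.2.1; have := z.1.2.2.2; have := z.1.1.2.2.2
      nlinarith⟩), by fun_prop⟩) (by
      rintro ⟨⟨x, t⟩, s⟩ h1 h2
      have : (s : ℝ) * (1 + t) = 1 := le_antisymm h1 h2
      simp only [ContinuousMap.comp_apply, ContinuousMap.coe_mk, this, sub_self]
      exact (h0 x).symm)
  have hw0 : ∀ z : T × I, w (z, 0) = g (PS.pr g c (f z.1)) := by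
    intro z
    rw [hw1 _ (by simp)]
    simp only [ContinuousMap.comp_apply, ContinuousMap.coe_mk]
    rw [← PS.ev_zero]
    congr 2; apply Subtype.ext; simp
  have hwv : ∀ z s, c (w (z, s)) = c (g (PS.pr g c (f z.1))) := by
    intro z s
    rcases le_total ((s : ℝ) * (1 + z.2)) 1 with hh | hh
    · rw [hw1 _ hh]
      simp only [ContinuousMap.comp_apply, ContinuousMap.coe_mk]
      rw [PS.ev_vert g c, PS.ev_zero]
    · rw [hw2 _ hh]
      simp only [ContinuousMap.comp_apply, ContinuousMap.coe_mk]
      rw [hv, key]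
  refine ⟨PS.mk ((PS.pr g c).comp (f.comp ContinuousMap.fst)) w hw0 ?_, ?_, ?_⟩
  · intro z s; rw [hwv, hw0]
  · intro x
    apply PS.ext'
    · rfl
    · intro t
      change w ((x, 0), t) = _
      rw [hw1 _ (by simpa using t.2.2)]
      simp only [ContinuousMap.comp_apply, ContinuousMap.coe_mk]
      congr 2; apply Subtype.ext; simp
  · rintro ⟨x, t⟩
    change w ((x, t), 1) = _
    rw [hw2 _ (by simpa using t.2.1)]
    simp

theorem PS.proj_c (z : PS g c) : c (PS.proj g c z) = c (g (PS.pr g c z)) := by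
  change c (PS.ev g c (z, 1)) = _
  rw [PS.ev_vert g c, PS.ev_zero]

/-- the constant path section -/
def PS.incl : C(X, PS g c) := PS.mk (ContinuousMap.id X) (g.comp ContinuousMap.fst)
  (fun _ => rfl) (fun _ _ => rfl)

theorem PS.pr_fhe : FHE (fun z => c (PS.proj g c z)) (fun x => c (g x)) (PS.pr g c) := by
  refine ⟨fun z => (PS.proj_c g c z).symm, PS.incl g c, fun _ => rfl, ?_, VH.of_eq fun x => rfl⟩
  refine ⟨PS.mk ((PS.pr g c).comp ContinuousMap.fst)
    ((PS.ev g c).comp ⟨fun z => (z.1.1, z.1.2 * z.2), by fun_prop⟩) ?_ ?_, ?_, ?_, ?_⟩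
  · intro x; simp [PS.ev_zero]
  · intro x t; simp only [ContinuousMap.comp_apply, ContinuousMap.coe_mk]
    rw [PS.ev_vert g c, PS.ev_vert g c (t := _ * 0)]
  · intro x
    apply PS.ext'
    · rfl
    · intro t
      change PS.ev g c (x, 0 * t) = g (PS.pr g c x)
      rw [zero_mul, PS.ev_zero]
  · intro x
    apply PS.ext'
    · rfl
    · intro t
      change PS.ev g c (x, 1 * t) = _
      rw [one_mul]; rfl
  · intro x t
    change c (PS.ev g c (x, t * 1)) = c (g (PS.pr g c x))
    rw [PS.ev_vert g c, PS.ev_zero]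

theorem PS.proj_vh : VH c (g.comp (PS.pr g c)) (PS.proj g c) :=
  ⟨PS.ev g c, fun x => PS.ev_zero g c x, fun x => rfl, fun x t => by
    rw [PS.ev_vert g c, PS.ev_zero]; rfl⟩

theorem VHLP.res {π : C(X, Y)} {c : Y → Z} (h : VHLP π c) (U : Set Z) :
    VHLP (res (p := fun x => c (π x)) (q := c) π (fun _ => rfl) U) (fun y => c y.1) := by
  intro T _ f k h0 hv
  obtain ⟨H, h1, h2⟩ := h T ⟨fun t => (f t).1, by fun_prop⟩ ⟨fun z => (k z).1, by fun_prop⟩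
    (fun x => congrArg Subtype.val (h0 x)) (fun x t => hv x t)
  refine ⟨⟨fun z => ⟨H z, by
    change c (π (H z)) ∈ U
    rw [h2]; exact (k z).2⟩, by fun_prop⟩, ?_, ?_⟩
  · intro x; exact Subtype.ext (h1 x)
  · intro z; exact Subtype.ext (h2 z)

/-- A fibre homotopy equivalence has shrinkable path space, over any subset -/
theorem PS.shr_res (U : Set Z)
    (h : FHE (fun x => c (g x.1)) (fun y => c y.1)
      (res (p := fun x => c (g x)) (q := c) g (fun _ => rfl) U)) :
    Shr (res (p := fun x => c (PS.proj g c x)) (q := c) (PS.proj g c) (fun _ => rfl) U) := by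
  apply Shr.of_FHE ((PS.vhlp g c).res U)
  have h1 := h.comp ((PS.pr_fhe g c).res U)
  exact h1.congr (VH.res (p := fun x => c (PS.proj g c x)) 
    (φ := g.comp (PS.pr g c)) (fun x => (PS.proj_c g c x).symm)
    (fun x => rfl) (PS.proj_vh g c) U)

theorem PS.shr (h : FHE (fun x => c (g x)) c g) : Shr (PS.proj g c) := by
  apply Shr.of_FHE (PS.vhlp g c)
  exact (h.comp (PS.pr_fhe g c)).congr (PS.proj_vh g c)

theorem PS.fhe_of_shr (h : Shr (PS.proj g c)) : FHE (fun x => c (g x)) c g := by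
  obtain ⟨s, hs, h⟩ := h
  refine ⟨fun _ => rfl, (PS.pr g c).comp s, ?_, ?_, ?_⟩
  · intro y
    change c (g (PS.pr g c (s y))) = _
    rw [← PS.proj_c g c, hs]
  · have := (h.comp_right (PS.incl g c))
    obtain ⟨K, h0, h1, h2⟩ := this
    apply VH.symm
    refine ⟨(PS.pr g c).comp K, ?_, ?_, ?_⟩
    · intro x; simp only [ContinuousMap.comp_apply, h0]; rfl
    · intro x; simp only [ContinuousMap.comp_apply, h1]; rfl
    · intro x t
      change c (g (PS.pr g c (K (x, t)))) = _
      rw [← PS.proj_c g c, h2]; rfl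
  · have := (PS.proj_vh g c).comp_right s
    exact this.trans (VH.of_eq hs)

end pathspace

section glue
variable {R Y : Type} [TopologicalSpace R] [TopologicalSpace Y]

theorem patch (π : C(R, Y)) (l : C(Y, ℝ)) {a m : ℝ} (ham : a < m)
    (h : Shr (res (p := fun x => l (π x)) (q := l) π (fun _ => rfl) (Set.Ioi a))) :
    ∃ (e : C(R, R)) (s : C({y // l y ∈ Set.Ioi a}, R)), (∀ y, π (s y) = y.1) ∧
      VH π (ContinuousMap.id R) e ∧ ∀ z (hz : m ≤ l (π z)), e z = s ⟨π z, ham.trans_le hz⟩ := by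
  classical
  obtain ⟨s, hs, K, h0, h1, h2⟩ := h
  let α : ℝ → I := fun r => Set.projIcc 0 1 zero_le_one ((r - (a+m)/2) / ((m - a)/2))
  have cα : Continuous α := by
    unfold α
    exact continuous_projIcc.comp (by fun_prop)
  have α0 : ∀ r, r ≤ (a+m)/2 → α r = 0 := by
    intro r hr
    apply Set.projIcc_of_le_left
    apply div_nonpos_of_nonpos_of_nonneg <;> linarith
  have α1 : ∀ r, m ≤ r → α r = 1 := by
    intro r hr
    apply Set.projIcc_of_right_le
    rw [le_div_iff₀] <;> linarith
  have cl1 : IsClosed {z : R × I | l (π z.1) ≤ (a+m)/2} := isClosed_le (by fun_prop) (by fun_prop)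
  have cl2 : IsClosed {z : R × I | (a+m)/2 ≤ l (π z.1)} := isClosed_le (by fun_prop) (by fun_prop)
  obtain ⟨C, hC1, hC2⟩ := glue2 (X := R × I) (Y := R) (fun z => l (π z.1) ≤ (a+m)/2)
    (fun z => (a+m)/2 ≤ l (π z.1)) cl1 cl2 (fun z => le_total _ _)
    ⟨fun z => z.1.1, by fun_prop⟩
    ⟨fun z => (K (⟨z.1.1, by have := z.2; simp only [Set.mem_Ioi]; linarith⟩, z.1.2 * α (l (π z.1.1)))).1, by fun_prop⟩ (by
      rintro ⟨z, t⟩ hp hq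
      simp only [ContinuousMap.coe_mk]
      rw [α0 _ hp, mul_zero, h0]; rfl)
  refine ⟨C.comp ⟨fun z => (z, 1), by fun_prop⟩, ⟨fun y => (s y).1, by fun_prop⟩, 
    fun y => congrArg Subtype.val (hs y), ⟨C, ?_, fun _ => rfl, ?_⟩, ?_⟩
  · intro z
    rcases le_total (l (π z)) ((a+m)/2) with h | h
    · rw [hC1 _ h]; rfl
    · rw [hC2 _ h]; simp [h0]
  · intro z t
    rcases le_total (l (π z)) ((a+m)/2) with h | h
    · rw [hC1 _ h]; rfl
    · rw [hC2 _ h]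
      simp only [ContinuousMap.coe_mk]
      exact congrArg Subtype.val (h2 _ _)
  · intro z hz
    have hz' : (a+m)/2 ≤ l (π z) := by linarith
    change C (z, 1) = _
    rw [hC2 _ hz']
    simp only [ContinuousMap.coe_mk]
    have e1 : (1 : I) * α (l (π z)) = 1 := by rw [α1 _ hz]; exact one_mul 1
    rw [e1, h1]; rfl

theorem Shr.glue (π : C(R, Y)) (l : C(Y, ℝ)) {a b : ℝ} (hab : a < b)
    (h1 : Shr (res (p := fun x => l (π x)) (q := l) π (fun _ => rfl) (Set.Ioi a)))
    (h2 : Shr (res (p := fun x => (-l) (π x)) (q := (-l)) π (fun _ => rfl) (Set.Ioi (-b)))) :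
    Shr π := by
  obtain ⟨e1, s1, hs1, hv1, he1⟩ := patch π l (a := a) (m := (a+b)/2) (by linarith) h1
  obtain ⟨e2, s2, hs2, hv2, he2⟩ := patch π (-l) (a := -b) (m := -((a+b)/2)) (by linarith) h2
  have cl1 : IsClosed {z : Y | l z ≤ (a+b)/2} := isClosed_le (by fun_prop) (by fun_prop)
  have cl2 : IsClosed {z : Y | (a+b)/2 ≤ l z} := isClosed_le (by fun_prop) (by fun_prop)
  obtain ⟨s, hS1, hS2⟩ := glue2 (fun z => l z ≤ (a+b)/2) (fun z => (a+b)/2 ≤ l z) cl1 cl2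
    (fun z => le_total _ _) 
    ⟨fun y => s2 ⟨y.1, by have := y.2; simp; linarith⟩, by fun_prop⟩
    ⟨fun y => e2 (s1 ⟨y.1, by have := y.2; simp; linarith⟩), by fun_prop⟩ (by
      intro y hp hq
      simp only [ContinuousMap.coe_mk]
      rw [he2 _ (by rw [hs1]; simpa using hp)]
      simp [hs1])
  have hπe1 : ∀ z, π (e1 z) = π z := fun z => hv1.end_eq z
  have hπe2 : ∀ z, π (e2 z) = π z := fun z => hv2.end_eq z
  refine ⟨s, ?_, ?_⟩
  · intro y
    rcases le_total (l y) ((a+b)/2) with h | h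
    · rw [hS1 _ h]; simp [hs2]
    · rw [hS2 _ h]; simp [hπe2, hs1]
  · refine (hv1.trans (hv2.comp_right e1)).trans (VH.of_eq ?_)
    intro z
    simp only [ContinuousMap.comp_apply]
    rcases le_total (l (π z)) ((a+b)/2) with h | h
    · rw [hS1 _ h, he2 _ (by rw [hπe1]; simpa using h)]
      simp [hπe1]
    · rw [hS2 _ h, he1 _ h]; rfl

variable {X Z : Type} [TopologicalSpace X] [TopologicalSpace Z]

/-- local to global principle for fibre homotopy equivalences -/
theorem FHE.glue {p : X → Z} {q : Y → Z} (hq : Continuous q) (φ : C(X, Y))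
    (h : ∀ x, q (φ x) = p x) (l : C(Z, ℝ)) {a b : ℝ} (hab : a < b)
    (h1 : FHE (fun x => p x.1) (fun y => q y.1) (AFib.res φ h {z | a < l z}))
    (h2 : FHE (fun x => p x.1) (fun y => q y.1) (AFib.res φ h {z | l z < b})) :
    FHE p q φ := by
  obtain rfl : (fun x => q (φ x)) = p := funext h
  apply PS.fhe_of_shr
  let lq : C(Y, ℝ) := ⟨fun y => l (q y), by fun_prop⟩
  apply Shr.glue (PS.proj φ q) lq hab
  · exact PS.shr_res φ q _ h1
  · have := PS.shr_res φ q _ h2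
    have e : {z | l z < b} = {z | - l z ∈ Set.Ioi (-b)} := by ext; simp
    rw [e] at this
    exact this

end glue
end AFib

set_option linter.unusedSectionVars false
namespace AFib

section ane

/-- absolute neighbourhood extensor (for metric spaces) -/
def ANE {V : Type} [TopologicalSpace V] (X : Set V) : Prop :=
  ∀ (M : Type) [MetricSpace M] (C : Set M) (f : M → V), IsClosed C → ContinuousOn f C →
    Set.MapsTo f C X → ∃ (O : Set M) (g : M → V), IsOpen O ∧ C ⊆ O ∧ ContinuousOn g O ∧
      Set.MapsTo g O X ∧ Set.EqOn g f C

variable {V W : Type} [TopologicalSpace V] [TopologicalSpace W]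

theorem ANE.retract {X : Set V} {Y : Set W} (h : ANE X) (i : V → W) (r : W → V)
    (hi : ContinuousOn i X) (hr : ContinuousOn r Y) (hiX : Set.MapsTo i X Y)
    (hrY : Set.MapsTo r Y X) (hir : ∀ y ∈ Y, i (r y) = y) : ANE Y := by
  intro M _ C f hC hf hfX
  obtain ⟨O, g, hO, hCO, hg, hgX, hgf⟩ := h M C (r ∘ f) hC (hr.comp hf hfX) (hrY.comp hfX)
  exact ⟨O, i ∘ g, hO, hCO, hi.comp hg hgX, hiX.comp hgX, fun x hx => by
    simp [hgf hx, hir _ (hfX hx)]⟩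

theorem ANE.prod {X : Set V} {Y : Set W} (h : ANE X) (h' : ANE Y) : ANE (X ×ˢ Y) := by
  intro M _ C f hC hf hfX
  obtain ⟨O, g, hO, hCO, hg, hgX, hgf⟩ := h M C (Prod.fst ∘ f) hC (continuous_fst.comp_continuousOn hf)
    (fun x hx => (hfX hx).1)
  obtain ⟨O', g', hO', hCO', hg', hgX', hgf'⟩ := h' M C (Prod.snd ∘ f) hC
    (continuous_snd.comp_continuousOn hf) (fun x hx => (hfX hx).2)
  refine ⟨O ∩ O', fun x => (g x, g' x), hO.inter hO', Set.subset_inter hCO hCO',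
    (hg.mono Set.inter_subset_left).prodMk (hg'.mono Set.inter_subset_right),
    fun x hx => ⟨hgX hx.1, hgX' hx.2⟩, fun x hx => Prod.ext (hgf hx) (hgf' hx)⟩

theorem ANE.empty : ANE (∅ : Set V) := by
  intro M _ C f hC hf hfX
  exact ⟨∅, f, isOpen_empty, fun x hx => (hfX hx).elim, by simp, by simp [Set.MapsTo], fun x hx => rfl⟩

theorem contOn_two {M : Type} [TopologicalSpace M] {g g1 g2 : M → V} {O Y1 Y2 : Set M}
    (h1 : IsClosed Y1) (h2 : IsClosed Y2) (hO : O ⊆ Y1 ∪ Y2) (hg1 : ContinuousOn g1 (O ∩ Y1))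
    (hg2 : ContinuousOn g2 (O ∩ Y2)) (e1 : ∀ x ∈ O, x ∈ Y1 → g x = g1 x)
    (e2 : ∀ x ∈ O, x ∈ Y2 → g x = g2 x) : ContinuousOn g O := by
  have c1 : ContinuousOn g (O ∩ Y1) := hg1.congr fun x hx => e1 x hx.1 hx.2
  have c2 : ContinuousOn g (O ∩ Y2) := hg2.congr fun x hx => e2 x hx.1 hx.2
  intro x hx
  have : O = (O ∩ Y1) ∪ (O ∩ Y2) := by
    rw [← Set.inter_union_distrib_left, Set.inter_eq_left.2 hO]
  rw [this]
  apply ContinuousWithinAt.union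
  · by_cases hxY : x ∈ Y1
    · exact c1 x ⟨hx, hxY⟩
    · apply continuousWithinAt_of_notMem_closure
      intro hh
      exact hxY (h1.closure_subset_iff.2 Set.inter_subset_right hh)
  · by_cases hxY : x ∈ Y2
    · exact c2 x ⟨hx, hxY⟩
    · apply continuousWithinAt_of_notMem_closure
      intro hh
      exact hxY (h2.closure_subset_iff.2 Set.inter_subset_right hh)

theorem ANE.union {X1 X2 : Set V} (c1 : IsClosed X1) (c2 : IsClosed X2) (h1 : ANE X1)
    (h2 : ANE X2) (h0 : ANE (X1 ∩ X2)) : ANE (X1 ∪ X2) := by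
  classical
  intro M _ C f hC hf hfX
  set C1 := C ∩ f ⁻¹' X1 with hC1
  set C2 := C ∩ f ⁻¹' X2 with hC2
  have cC1 : IsClosed C1 := hf.preimage_isClosed_of_isClosed hC c1
  have cC2 : IsClosed C2 := hf.preimage_isClosed_of_isClosed hC c2
  have cC : ∀ x ∈ C, x ∈ C1 ∨ x ∈ C2 := fun x hx => (hfX hx).imp (fun h => ⟨hx, h⟩) (fun h => ⟨hx, h⟩)
  let d1 : M → ENNReal := fun x => Metric.infEDist x C1
  let d2 : M → ENNReal := fun x => Metric.infEDist x C2
  have cd1 : Continuous d1 := Metric.continuous_infEDist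
  have cd2 : Continuous d2 := Metric.continuous_infEDist
  have hd1 : ∀ x, d1 x = 0 ↔ x ∈ C1 := fun x => (Metric.mem_iff_infEDist_zero_of_closed cC1).symm
  have hd2 : ∀ x, d2 x = 0 ↔ x ∈ C2 := fun x => (Metric.mem_iff_infEDist_zero_of_closed cC2).symm
  have m1 : ∀ x ∈ C, d1 x ≤ d2 x → x ∈ C1 := by
    intro x hx h
    rcases cC x hx with h' | h'
    · exact h'
    · rw [← hd2] at h'
      rw [h'] at h; exact (hd1 x).1 (le_antisymm h bot_le)
  have m2 : ∀ x ∈ C, d2 x ≤ d1 x → x ∈ C2 := by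
    intro x hx h
    rcases cC x hx with h' | h'
    · rw [← hd1] at h'
      rw [h'] at h; exact (hd2 x).1 (le_antisymm h bot_le)
    · exact h'
  have cY1 : IsClosed {x | d1 x ≤ d2 x} := isClosed_le cd1 cd2
  have cY2 : IsClosed {x | d2 x ≤ d1 x} := isClosed_le cd2 cd1
  have cY0 : IsClosed {x | d1 x = d2 x} := isClosed_eq cd1 cd2
  obtain ⟨O0, g0, hO0, hCO0, hg0, hgX0, hgf0⟩ := h0 M (C1 ∩ C2) f (cC1.inter cC2)
    (hf.mono fun x hx => hx.1.1) (fun x hx => ⟨hx.1.2, hx.2.2⟩)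
  obtain ⟨N, hN, hCN, hNO⟩ := normal_exists_closure_subset (cC1.inter cC2) hO0 hCO0
  let Z0 := {x | d1 x = d2 x} ∩ closure N
  have cZ0 : IsClosed Z0 := cY0.inter isClosed_closure
  have ext1 : ∀ (D : Set M) (X : Set V), IsClosed D → D ⊆ C → ANE X → Set.MapsTo f D X →
      Set.MapsTo g0 O0 X → (∀ x ∈ D, x ∈ Z0 → x ∈ C1 ∩ C2) → 
      ∃ (O : Set M) (g : M → V), IsOpen O ∧ D ⊆ O ∧ Z0 ⊆ O ∧ ContinuousOn g O ∧
      Set.MapsTo g O X ∧ Set.EqOn g f D ∧ Set.EqOn g g0 Z0 := by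
    intro D X hD hDC hX hfD hg0X hDZ
    let f1 : M → V := fun x => if x ∈ D then f x else g0 x
    have e1 : ∀ x ∈ D, f1 x = f x := fun x hx => by simp [f1, hx]
    have e2 : ∀ x ∈ Z0, f1 x = g0 x := fun x hx => by
      by_cases h : x ∈ D
      · rw [e1 x h, hgf0 (hDZ x h hx)]
      · simp [f1, h]
    obtain ⟨O, g, a, b, c, d, e⟩ := hX M (D ∪ Z0) f1 (hD.union cZ0)
      (contOn_two hD cZ0 le_rfl (hf.mono fun x hx => hDC hx.2)
        (hg0.mono fun x hx => hNO hx.2.2) (fun x _ hx => e1 x hx) (fun x _ hx => e2 x hx)) (by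
        rintro x (hx | hx)
        · rw [e1 x hx]; exact hfD hx
        · rw [e2 x hx]; exact hg0X (hNO hx.2))
    exact ⟨O, g, a, fun x hx => b (Or.inl hx), fun x hx => b (Or.inr hx), c, d,
      fun x hx => (e (Or.inl hx)).trans (e1 x hx), fun x hx => (e (Or.inr hx)).trans (e2 x hx)⟩
  obtain ⟨O1, g1, oO1, C1O, ZO1, cg1, mg1, eg1, eg1'⟩ := ext1 C1 X1 cC1 (fun x hx => hx.1) h1
    (fun x hx => hx.2) (fun x hx => (hgX0 hx).1) (fun x hx hz => ⟨hx, m2 x hx.1 (hz.1.symm.le)⟩)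
  obtain ⟨O2, g2, oO2, C2O, ZO2, cg2, mg2, eg2, eg2'⟩ := ext1 C2 X2 cC2 (fun x hx => hx.1) h2
    (fun x hx => hx.2) (fun x hx => (hgX0 hx).2) (fun x hx hz => ⟨m1 x hx.1 (hz.1.le), hx⟩)
  let g : M → V := fun x => if d1 x ≤ d2 x then g1 x else g2 x
  let O : Set M := ({x | d1 x ≤ d2 x}ᶜ ∪ O1) ∩ ({x | d2 x ≤ d1 x}ᶜ ∪ O2) ∩ ({x | d1 x = d2 x}ᶜ ∪ N)
  have r1 : ∀ x ∈ O, d1 x ≤ d2 x → x ∈ O1 := fun x hx h => hx.1.1.resolve_left (fun h' => h' h)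
  have r2 : ∀ x ∈ O, d2 x ≤ d1 x → x ∈ O2 := fun x hx h => hx.1.2.resolve_left (fun h' => h' h)
  have r3 : ∀ x ∈ O, d1 x = d2 x → x ∈ N := fun x hx h => hx.2.resolve_left (fun h' => h' h)
  have s1 : ∀ x ∈ O, d1 x ≤ d2 x → g x = g1 x := fun x hx h => by simp [g, h]
  have s2 : ∀ x ∈ O, d2 x ≤ d1 x → g x = g2 x := fun x hx h => by
    by_cases h' : d1 x ≤ d2 x
    · rw [s1 x hx h']
      have e := le_antisymm h' h
      have : x ∈ Z0 := ⟨e, subset_closure (r3 x hx e)⟩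
      rw [eg1' this, eg2' this]
    · simp [g, h']
  refine ⟨O, g, ?_, ?_, ?_, ?_, ?_⟩
  · exact ((cY1.isOpen_compl.union oO1).inter (cY2.isOpen_compl.union oO2)).inter
      (cY0.isOpen_compl.union hN)
  · intro x hx
    refine ⟨⟨?_, ?_⟩, ?_⟩
    · by_cases h : d1 x ≤ d2 x
      · right; exact C1O (m1 x hx h)
      · left; exact h
    · by_cases h : d2 x ≤ d1 x
      · right; exact C2O (m2 x hx h)
      · left; exact h
    · by_cases h : d1 x = d2 x
      · right; exact hCN ⟨m1 x hx h.le, m2 x hx h.symm.le⟩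
      · left; exact h
  · exact contOn_two cY1 cY2 (fun x _ => le_total (d1 x) (d2 x)) (cg1.mono fun x hx => r1 x hx.1 hx.2)
      (cg2.mono fun x hx => r2 x hx.1 hx.2) s1 s2
  · intro x hx
    rcases le_total (d1 x) (d2 x) with h | h
    · rw [s1 x hx h]; exact Or.inl (mg1 (r1 x hx h))
    · rw [s2 x hx h]; exact Or.inr (mg2 (r2 x hx h))
  · intro x hx
    have hxO : x ∈ C1 ∨ x ∈ C2 := cC x hx
    rcases le_total (d1 x) (d2 x) with h | h
    · simp only [g, h, if_true]; exact eg1 (m1 x hx h)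
    · by_cases h' : d1 x ≤ d2 x
      · simp only [g, h', if_true]; exact eg1 (m1 x hx h')
      · simp only [g, h', if_false]; exact eg2 (m2 x hx h)

theorem ANE.convexE {n : ℕ} {X : Set (EuclideanSpace ℝ (Fin n))} (hX : IsClosed X)
    (hc : Convex ℝ X) : ANE X := by
  rcases X.eq_empty_or_nonempty with rfl | hne
  · exact ANE.empty
  have hcomp : IsComplete X := hX.isComplete
  choose P hP1 hP2 using fun u => exists_norm_eq_iInf_of_complete_convex hne hcomp hc u
  have hP3 : ∀ u, ∀ w ∈ X, inner ℝ (u - P u) (w - P u) ≤ 0 := fun u =>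
    (norm_eq_iInf_iff_real_inner_le_zero hc (hP1 u)).1 (hP2 u)
  have hPid : ∀ u ∈ X, P u = u := by
    intro u hu
    have := hP3 u u hu
    rw [real_inner_self_eq_norm_sq] at this
    have h0 : ‖u - P u‖ = 0 := by nlinarith [norm_nonneg (u - P u)]
    rw [norm_sub_eq_zero_iff] at h0; exact h0.symm
  have hL : LipschitzWith 1 P := by
    apply LipschitzWith.of_dist_le_mul
    intro u v
    have h1 := hP3 u (P v) (hP1 v)
    have h2 := hP3 v (P u) (hP1 u)
    have h3 : ‖P u - P v‖ ^ 2 ≤ inner ℝ (u - v) (P u - P v) := by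
      rw [← real_inner_self_eq_norm_sq]
      have : inner ℝ (u - v) (P u - P v) - inner ℝ (P u - P v) (P u - P v)
        = - inner ℝ (u - P u) (P v - P u) - inner ℝ (v - P v) (P u - P v) := by
        rw [← neg_sub (P u) (P v), inner_neg_right, neg_neg, ← inner_sub_left, ← inner_sub_left]
        congr 1; abel
      linarith
    have h4 := real_inner_le_norm (u - v) (P u - P v)
    rw [dist_eq_norm, dist_eq_norm, NNReal.coe_one, one_mul]
    by_contra hcon
    push Not at hcon
    nlinarith [norm_nonneg (u - v), norm_nonneg (P u - P v)]
  intro M _ C f hC hf hfX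
  obtain ⟨g, hg⟩ := ContinuousMap.exists_restrict_eq (Y := EuclideanSpace ℝ (Fin n)) hC
    ⟨C.domRestrict f, continuousOn_iff_continuous_domRestrict.1 hf⟩
  refine ⟨Set.univ, P ∘ g, isOpen_univ, Set.subset_univ _,
    (hL.continuous.comp g.continuous).continuousOn, fun x _ => hP1 _, fun x hx => ?_⟩
  have : g x = f x := congrArg (fun k => k ⟨x, hx⟩) hg
  simp [this, hPid _ (hfX hx)]

end ane

section nice
variable {V : Type} [NormedAddCommGroup V] [NormedSpace ℝ V] [FiniteDimensional ℝ V]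

theorem ANE.convex {X : Set V} (hX : IsClosed X) (hc : Convex ℝ X) : ANE X := by
  let e := toEuclidean (E := V)
  have h : ANE (e '' X) := ANE.convexE (e.toHomeomorph.isClosedMap _ hX)
    (hc.linear_image e.toLinearEquiv.toLinearMap)
  refine h.retract e.symm e e.symm.continuous.continuousOn e.continuous.continuousOn ?_ ?_ ?_
  · rintro _ ⟨x, hx, rfl⟩; simpa using hx
  · exact fun x hx => ⟨x, hx, rfl⟩
  · intro y _; simp

/-- finite unions of compact convex sets -/
inductive Nice : Set V → Prop
  | empty : Nice ∅
  | cons (X A : Set V) : Nice X → IsCompact A → Convex ℝ A → Nice (X ∪ A)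

theorem Nice.isCompact {X : Set V} (h : Nice X) : IsCompact X := by
  induction h with
  | empty => exact isCompact_empty
  | cons X A _ hA _ ih => exact ih.union hA

theorem Nice.of_convex {A : Set V} (hA : IsCompact A) (hc : Convex ℝ A) : Nice A := by
  simpa using Nice.cons ∅ A Nice.empty hA hc

theorem Nice.union {X Y : Set V} (h : Nice X) (h' : Nice Y) : Nice (X ∪ Y) := by
  induction h' with
  | empty => simpa using h
  | cons Y A _ hA hc ih => rw [← Set.union_assoc]; exact Nice.cons _ _ ih hA hc

theorem Nice.inter_convex {X Q : Set V} (h : Nice X) (hQ : IsClosed Q) (hc : Convex ℝ Q) :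
    Nice (X ∩ Q) := by
  induction h with
  | empty => simpa using Nice.empty
  | cons X A _ hA hcA ih =>
    rw [Set.union_inter_distrib_right]
    exact Nice.cons _ _ ih (hA.inter_right hQ) (hcA.inter hc)

theorem Nice.inter {X Y : Set V} (h : Nice X) (h' : Nice Y) : Nice (X ∩ Y) := by
  induction h' with
  | empty => simpa using Nice.empty
  | cons Y A _ hA hc ih =>
    rw [Set.inter_union_distrib_left]
    exact ih.union (h.inter_convex hA.isClosed hc)

theorem Nice.biUnion {ι : Type} (s : Finset ι) (X : ι → Set V) (h : ∀ i ∈ s, Nice (X i)) :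
    Nice (⋃ i ∈ s, X i) := by
  classical
  induction s using Finset.induction_on with
  | empty => simpa using Nice.empty
  | insert a s ha ih =>
    rw [Finset.set_biUnion_insert]
    exact (h a (by simp)).union (ih fun i hi => h i (by simp [hi]))

theorem Nice.ane {X : Set V} (h : Nice X) : ANE X := by
  have : ∀ Q : Set V, IsClosed Q → Convex ℝ Q → ANE (X ∩ Q) := by
    induction h with
    | empty => intro Q _ _; simpa using ANE.empty
    | cons X A hX hA hcA ih =>
      intro Q hQ hc
      rw [Set.union_inter_distrib_right]
      apply ANE.union (hX.isCompact.isClosed.inter hQ) (hA.isClosed.inter hQ) (ih Q hQ hc)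
      · exact ANE.convex (hA.isClosed.inter hQ) (hcA.inter hc)
      · have := ih (A ∩ Q) (hA.isClosed.inter hQ) (hcA.inter hc)
        convert this using 1
        ext x; simp; tauto
  simpa using this Set.univ isClosed_univ convex_univ

/-- functions whose sub- and superlevel sets are nice -/
structure NiceFn (l : V → ℝ) : Prop where
  cont : Continuous l
  le : ∀ X t, Nice X → Nice (X ∩ {x | l x ≤ t})
  ge : ∀ X t, Nice X → Nice (X ∩ {x | t ≤ l x})

theorem NiceFn.rad {n : ℕ} (c : Fin n → ℝ) : NiceFn (fun x => ‖x - c‖) := by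
  refine ⟨by fun_prop, ?_, ?_⟩
  · intro X t hX
    have : {x : Fin n → ℝ | ‖x - c‖ ≤ t} = Metric.closedBall c t := by
      ext x; simp [dist_eq_norm]
    rw [this]
    exact hX.inter_convex Metric.isClosed_closedBall (convex_closedBall _ _)
  · intro X t hX
    rcases le_or_gt t 0 with ht | ht
    · convert hX using 1
      rw [Set.inter_eq_left]; intro x _; exact ht.trans (norm_nonneg _)
    · have : X ∩ {x | t ≤ ‖x - c‖} = ⋃ i ∈ (Finset.univ : Finset (Fin n)),
          ((X ∩ {x | c i + t ≤ x i}) ∪ (X ∩ {x | x i ≤ c i - t})) := by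
        ext x
        have : t ≤ ‖x - c‖ ↔ ∃ i, t ≤ |x i - c i| := by
          have := pi_norm_lt_iff (x := x - c) ht
          rw [← not_iff_not, not_le, this]; simp
        simp only [Set.mem_inter_iff, Set.mem_ofPred_eq, this, Finset.mem_univ, Set.iUnion_true,
          Set.mem_iUnion, Set.mem_union, le_abs]
        constructor
        · rintro ⟨hx, i, h | h⟩
          · exact ⟨i, Or.inl ⟨hx, by linarith⟩⟩
          · exact ⟨i, Or.inr ⟨hx, by linarith⟩⟩
        · rintro ⟨i, ⟨hx, h⟩ | ⟨hx, h⟩⟩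
          · exact ⟨hx, i, Or.inl (by linarith)⟩
          · exact ⟨hx, i, Or.inr (by linarith)⟩
      rw [this]
      apply Nice.biUnion
      intro i _
      have hl : IsLinearMap ℝ (fun x : Fin n → ℝ => x i) := ⟨fun _ _ => rfl, fun _ _ => rfl⟩
      exact (hX.inter_convex (isClosed_le (by fun_prop) (by fun_prop)) (convex_halfSpace_ge hl _)).union
        (hX.inter_convex (isClosed_le (by fun_prop) (by fun_prop)) (convex_halfSpace_le hl _))

theorem Nice.complex {n : ℕ} (K : Geometry.SimplicialComplex ℝ (Fin n → ℝ)) (h : K.faces.Finite) :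
    Nice K.space := by
  have : K.space = ⋃ s ∈ h.toFinset, convexHull ℝ (s : Set (Fin n → ℝ)) := by
    simp [Geometry.SimplicialComplex.space]
  rw [this]
  apply Nice.biUnion
  intro s _
  exact Nice.of_convex (Set.Finite.isCompact_convexHull (𝕜 := ℝ) s.finite_toSet) (convex_convexHull _ _)

theorem ANE.isENR {X : Set V} (h : ANE X) (hX : IsClosed X) : IsENR X := by
  let e := (toEuclidean (E := V)).toHomeomorph.trans
    (EuclideanSpace.equiv (Fin (Module.finrank ℝ V)) ℝ).toHomeomorph
  let N := Module.finrank ℝ V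
  let Y : Set (Fin N → ℝ) := e '' X
  have hY : ANE Y := by
    refine h.retract e e.symm e.continuous.continuousOn e.symm.continuous.continuousOn ?_ ?_ ?_
    · exact fun x hx => ⟨x, hx, rfl⟩
    · rintro _ ⟨x, hx, rfl⟩; simpa using hx
    · intro y _; simp
  obtain ⟨O, g, hO, hCO, hg, hgX, hgf⟩ := hY (Fin N → ℝ) Y id (e.isClosedMap _ hX)
    continuousOn_id (fun x hx => hx)
  refine ⟨N, Y, ⟨e.image X⟩, O, hO, hCO, ⟨fun x => ⟨g x.1, hgX x.2⟩, ?_⟩, ?_⟩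
  · exact Continuous.subtype_mk (continuousOn_iff_continuous_domRestrict.1 hg) _
  · intro x hx
    exact Subtype.ext (hgf hx)

end nice
end AFib

namespace AFib

section triv
variable {T B V F : Type} [TopologicalSpace T] [TopologicalSpace B] [TopologicalSpace V]
  [TopologicalSpace F]

theorem triv (π : C(T, B)) (hπ : VHLP π (fun _ : B => ())) (ι : C(B, V))
    (hι : Function.Injective ι) (K : Set V) (j : C(K, B)) (hj : ∀ x, ι (j x) = x.1) (b0 : B)
    (h : C(K × I, B)) (h0 : ∀ x, h (x, 0) = j x) (h1 : ∀ x, h (x, 1) = b0) :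
    ∃ u : C(K × {a // π a = b0}, {a // ι (π a) ∈ K}),
      FHE (fun z => z.1.1) (fun a => ι (π a.1)) u := by
  have hjp : ∀ a (ha : ι (π a) ∈ K), j ⟨ι (π a), ha⟩ = π a := fun a ha => hι (hj _)
  obtain ⟨D, hD0, hD1⟩ := hπ {a // ι (π a) ∈ K} ⟨fun a => a.1, by fun_prop⟩
    ⟨fun z => h (⟨ι (π z.1.1), z.1.2⟩, z.2), by fun_prop⟩
    (fun x => by simp [h0, hjp]) (fun _ _ => rfl)
  obtain ⟨U, hU0, hU1⟩ := hπ (K × {a // π a = b0}) ⟨fun a => a.2.1, by fun_prop⟩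
    ⟨fun z => h (z.1.1, σ z.2), by fun_prop⟩
    (fun x => by simp [h1, x.2.2]) (fun _ _ => rfl)
  simp only [ContinuousMap.coe_mk] at hD0 hD1 hU0 hU1
  have hu : ∀ z, ι (π (U (z, 1))) = z.1.1 := fun z => by rw [hU1]; simp [h0, hj]
  have hu' : ∀ z, π (U (z, 1)) = j z.1 := fun z => by rw [hU1]; simp [h0]
  have hv : ∀ a, π (D (a, 1)) = b0 := fun z => by rw [hD1]; simp [h1]
  let u : C(K × {a // π a = b0}, {a // ι (π a) ∈ K}) :=
    ⟨fun z => ⟨U (z, 1), by rw [hu]; exact z.1.2⟩, by fun_prop⟩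
  let v : C({a // ι (π a) ∈ K}, K × {a // π a = b0}) :=
    ⟨fun a => (⟨ι (π a.1), a.2⟩, ⟨D (a, 1), hv a⟩), by fun_prop⟩
  refine ⟨u, hu, v, fun _ => rfl, ?_, ?_⟩
  · have := hπ.unique (T := K × {a // π a = b0})
      (D.comp ⟨fun z => (u z.1, z.2), by fun_prop⟩)
      (U.comp ⟨fun z => (z.1, σ z.2), by fun_prop⟩) π.continuous
      (fun z => by
        change π (D (u z.1, z.2)) = π (U (z.1, σ z.2))
        rw [hD1, hU1, symm_symm]
        congr 2
        exact Subtype.ext (hu z.1))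
      (fun x => by simp [hD0, u]) (fun _ _ => rfl)
    obtain ⟨G, hG0, hG1, hG2⟩ := this
    have key : ∀ z, π (G z) = b0 := fun z => by rw [hG2 z.1 z.2]; exact hv _
    refine ⟨⟨fun z => (z.1.1, ⟨G z, key z⟩), by fun_prop⟩, ?_, ?_, ?_⟩
    · intro x
      refine Prod.ext (Subtype.ext (hu x).symm) (Subtype.ext ?_)
      simp [hG0, v]
    · intro x
      refine Prod.ext rfl (Subtype.ext ?_)
      simp [hG1, hU0]
    · intro x t
      exact (hu x).symm
  · have := hπ.unique (T := {a // ι (π a) ∈ K})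
      (U.comp ⟨fun z => (v z.1, z.2), by fun_prop⟩)
      (D.comp ⟨fun z => (z.1, σ z.2), by fun_prop⟩) π.continuous
      (fun z => by
        simp only [ContinuousMap.comp_apply, ContinuousMap.coe_mk, hD1, hU1, v])
      (fun x => by simp [hU0, v]) (fun _ _ => rfl)
    obtain ⟨G, hG0, hG1, hG2⟩ := this
    have key : ∀ x t, π (G (x, t)) = π x.1 := fun x t => by
      rw [hG2]
      change π (U (v x, 1)) = _
      rw [hu']; exact hjp _ _
    have key' : ∀ z, ι (π (G z)) ∈ K := fun z => by rw [key z.1 z.2]; exact z.1.2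
    refine ⟨⟨fun z => ⟨G z, key' z⟩, by fun_prop⟩, ?_, ?_, ?_⟩
    · intro x; exact Subtype.ext (hG0 x)
    · intro x; refine Subtype.ext ((hG1 x).trans ?_); simp [hD0]
    · intro x t
      change ι (π (G (x, t))) = ι (π (u (v x)).1)
      rw [key]; exact (hu (v x)).symm

theorem FHE.prod_he {K : Set V} (e : ContinuousMap.HomotopyEquiv F T) :
    FHE (X := K × F) (Y := K × T) (fun z => z.1.1) (fun z => z.1.1)
      ⟨fun z => (z.1, e.toFun z.2), by fun_prop⟩ := by
  refine ⟨fun _ => rfl, ⟨fun z => (z.1, e.invFun z.2), by fun_prop⟩, fun _ => rfl, ?_, ?_⟩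
  · obtain ⟨H⟩ := e.left_inv
    exact ⟨⟨fun z => (z.1.1, H (z.2, z.1.2)), by fun_prop⟩, fun x => by simp, fun x => by simp,
      fun x t => rfl⟩
  · obtain ⟨H⟩ := e.right_inv
    exact ⟨⟨fun z => (z.1.1, H (z.2, z.1.2)), by fun_prop⟩, fun x => by simp, fun x => by simp,
      fun x t => rfl⟩

theorem triv' (π : C(T, B)) (hπ : VHLP π (fun _ : B => ())) (ι : C(B, V))
    (hι : Function.Injective ι) (K : Set V) (j : C(K, B)) (hj : ∀ x, ι (j x) = x.1) (b0 : B)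
    (h : C(K × I, B)) (h0 : ∀ x, h (x, 0) = j x) (h1 : ∀ x, h (x, 1) = b0)
    (e : ContinuousMap.HomotopyEquiv F {a // π a = b0}) :
    ∃ u : C(K × F, {a // ι (π a) ∈ K}), FHE (fun z => z.1.1) (fun a => ι (π a.1)) u := by
  obtain ⟨u, hu⟩ := triv π hπ ι hι K j hj b0 h h0 h1
  exact ⟨_, hu.comp (FHE.prod_he e)⟩

end triv
end AFib

namespace AFib
set_option linter.unusedSectionVars false

section reb
variable {T V : Type} [TopologicalSpace T] [TopologicalSpace V]

/-- change of the ambient subset -/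
def reb (q : C(T, V)) (K L U : Set V) (h : U ⊆ L) :
    C({a : {a // q a ∈ K} // q a.1 ∈ U}, {a : {a // q a ∈ L} // q a.1 ∈ U}) :=
  ⟨fun a => ⟨⟨a.1.1, h a.2⟩, a.2⟩, by fun_prop⟩

theorem reb_fhe (q : C(T, V)) (K L U : Set V) (h : U ⊆ L) (h' : U ⊆ K) :
    FHE (fun a => q a.1.1) (fun a => q a.1.1) (reb q K L U h) :=
  FHE.of_inv _ (reb q L K U h') (fun _ => rfl) (fun _ => rfl) (fun _ => rfl)

end reb

/-- Data of one inductive step. -/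
structure SD (T V W Y : Type) [TopologicalSpace T] [TopologicalSpace V] [TopologicalSpace W]
    [NormedAddCommGroup Y] [NormedSpace ℝ Y] where
  q : C(T, V)
  L1 : Set V
  L : Set V
  K : Set V
  l : C(V, ℝ)
  F : Set Y
  D : Set Y
  E1 : Set (V × W)
  φ1 : C({a // q a ∈ L1}, E1)
  u : C(K × F, {a // q a ∈ K})
  v : C({a // q a ∈ K}, K × F)
  η : C({a // q a ∈ K} × I, {a // q a ∈ K})
  gh : C(V × Y, W)
  h1 : ∀ x ∈ L, 0 ≤ l x → x ∈ L1
  hL1 : L1 ⊆ L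
  h2 : ∀ x ∈ L, l x ≤ 2 → x ∈ K
  hE1 : ∀ z ∈ E1, z.1 ∈ L1
  hφ1 : FHE (fun a => q a.1) (fun z => z.1.1) φ1
  hu : FHE (fun z => z.1.1) (fun a => q a.1) u
  hv : FHE (fun a => q a.1) (fun z => z.1.1) v
  η0 : ∀ a, η (a, 0) = a
  η1 : ∀ a, η (a, 1) = u (v a)
  ηq : ∀ a t, q (η (a, t)).1 = q a.1
  hgh : ∀ (x : K) (y : F) (hx : q (u (x, y)).1 ∈ L1), x.1 ∈ L → 0 ≤ l x.1 → l x.1 ≤ 2 →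
    gh (x.1, y.1) = (φ1 ⟨(u (x, y)).1, hx⟩).1.2
  hFD : F ⊆ D
  hFc : IsClosed F
  hD0 : (0 : Y) ∈ D
  hDc : Convex ℝ D

namespace SD
variable {T V W Y : Type} [TopologicalSpace T] [TopologicalSpace V] [TopologicalSpace W]
    [NormedAddCommGroup Y] [NormedSpace ℝ Y] [T2Space W] (d : SD T V W Y)

/-- the new total space -/
def E : Set (V × W × Y × ℝ) :=
  {z | z.1 ∈ d.L ∧ z.2.2.1 ∈ d.D ∧ z.2.2.2 ∈ Set.Icc (0 : ℝ) 1 ∧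
    (0 ≤ d.l z.1 → (z.1, z.2.1) ∈ d.E1) ∧ (0 ≤ d.l z.1 ∨ z.2.2.2 = 1) ∧
    (z.2.2.2 = 0 ∨ (d.l z.1 ≤ 2 ∧ z.2.2.1 ∈ d.F ∧ z.2.1 = d.gh (z.1, z.2.2.1)))}

/-- the band -/
def Bn : Set V := {x | x ∈ d.L ∧ 0 ≤ d.l x ∧ d.l x < 2}

theorem Bn_K : d.Bn ⊆ d.K := fun x hx => d.h2 x hx.1 hx.2.2.le
theorem Bn_L1 : d.Bn ⊆ d.L1 := fun x hx => d.h1 x hx.1 hx.2.1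

/-- the band map -/
def g : C({z : d.K × d.F // z.1.1 ∈ d.Bn}, {z : d.E1 // z.1.1 ∈ d.Bn}) :=
  ((res d.φ1 d.hφ1.1 d.Bn).comp (reb d.q d.K d.L1 d.Bn d.Bn_L1)).comp (res d.u d.hu.1 d.Bn)

theorem g_fhe : FHE (fun z => z.1.1.1) (fun z => z.1.1.1) d.g :=
  ((d.hφ1.res d.Bn).comp (reb_fhe d.q d.K d.L1 d.Bn d.Bn_L1 d.Bn_K)).comp (d.hu.res d.Bn)

theorem g_fst (z) : (d.g z).1.1.1 = z.1.1.1 := d.g_fhe.1 z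

theorem hu1 (z) : d.q (d.u z).1 = z.1.1 := d.hu.1 z

theorem gh_eq (x : d.K) (y : d.F) (hx : x.1 ∈ d.L) (h0 : 0 ≤ d.l x.1) (h2 : d.l x.1 ≤ 2) 
    (hq : d.q (d.u (x, y)).1 ∈ d.L1) :
    (d.φ1 ⟨(d.u (x, y)).1, hq⟩).1 = (x.1, d.gh (x.1, y.1)) := by
  refine Prod.ext ?_ ?_
  · have := d.hφ1.1 ⟨(d.u (x, y)).1, hq⟩
    exact this.trans (d.hu.1 (x, y))
  · exact (d.hgh x y hq hx h0 h2).symm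

theorem g_eq (z) : (d.g z).1.1 = (z.1.1.1, d.gh (z.1.1.1, z.1.2.1)) :=
  d.gh_eq z.1.1 z.1.2 z.2.1 z.2.2.1 z.2.2.2.le _

theorem gh_mem (x : V) (hx : x ∈ d.L) (h0 : 0 ≤ d.l x) (h2 : d.l x ≤ 2) (y : Y) (hy : y ∈ d.F) :
    (x, d.gh (x, y)) ∈ d.E1 := by
  have hq : d.q (d.u (⟨x, d.h2 x hx h2⟩, ⟨y, hy⟩)).1 ∈ d.L1 := by
    rw [d.hu1]; exact d.h1 x hx h0
  have := d.gh_eq ⟨x, d.h2 x hx h2⟩ ⟨y, hy⟩ hx h0 h2 hq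
  simp only at this
  rw [← this]; exact (d.φ1 _).2

theorem j_mem (x : V) (hx : x ∈ d.L) (h2 : d.l x ≤ 2) (y : Y) (hy : y ∈ d.F) (r : ℝ)
    (hr : r ∈ Set.Icc (0 : ℝ) 1) (h : 0 ≤ d.l x ∨ r = 1) :
    (x, d.gh (x, y), y, r) ∈ d.E :=
  ⟨hx, d.hFD hy, hr, fun h0 => d.gh_mem x hx h0 h2 y hy, h, Or.inr ⟨h2, hy, rfl⟩⟩

/-- the lower part of the base -/
def U2 : Set V := {x | x ∈ d.L ∧ d.l x < 2}

/-- inclusion of the cylinder end -/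
def inc : C({z : d.K × d.F // z.1.1 ∈ d.U2}, {z : d.E // z.1.1 ∈ {x | d.l x < 2}}) :=
  ⟨fun z => ⟨⟨(z.1.1.1, d.gh (z.1.1.1, z.1.2.1), z.1.2.1, 1),
    d.j_mem _ z.2.1 z.2.2.le _ z.1.2.2 1 (by simp) (Or.inr rfl)⟩, z.2.2⟩, by fun_prop⟩

/-- projection to the base -/
def c : {z : d.E1 // z.1.1 ∈ d.Bn} → V := fun z => z.1.1.1

abbrev R : Type := {z : d.E // z.1.1 ∈ {x | d.l x < 2}}

abbrev Q : Type := {z : d.R // z.1.1.2.2.2 ≤ 1/2}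

theorem inc_fhe : FHE (fun z => z.1.1.1) (fun z => z.1.1.1) d.inc := by
  obtain ⟨s, hs, C, hC0, hC1, hC2⟩ := PS.shr d.g d.c (by
    have := d.g_fhe
    rwa [show (fun z : {z : d.K × d.F // z.1.1 ∈ d.Bn} => z.1.1.1) = (fun z => d.c (d.g z)) from
      funext fun z => (d.g_fst z).symm] at this)
  have Rlt : ∀ z : d.R, d.l z.1.1.1 < 2 := fun z => z.2
  have Rr0 : ∀ z : d.R, 0 ≤ z.1.1.2.2.2 := fun z => z.1.2.2.2.1.1
  have Rr1 : ∀ z : d.R, z.1.1.2.2.2 ≤ 1 := fun z => z.1.2.2.2.1.2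
  have RF : ∀ z : d.R, z.1.1.2.2.2 ≠ 0 → z.1.1.2.2.1 ∈ d.F ∧ z.1.1.2.1 = d.gh (z.1.1.1, z.1.1.2.2.1) :=
    fun z hz => (z.1.2.2.2.2.2.2.resolve_left hz).2
  have R0 : ∀ z : d.R, z.1.1.2.2.2 ≠ 1 → 0 ≤ d.l z.1.1.1 := fun z hz =>
    z.1.2.2.2.2.2.1.resolve_right hz
  have RE : ∀ z : d.R, 0 ≤ d.l z.1.1.1 → (z.1.1.1, z.1.1.2.1) ∈ d.E1 := fun z hz => z.1.2.2.2.2.1 hz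
  have Q0 : ∀ z : d.R, z.1.1.2.2.2 ≤ 1/2 → 0 ≤ d.l z.1.1.1 := fun z hz => R0 z (by linarith)
  have QB : ∀ z : d.R, z.1.1.2.2.2 ≤ 1/2 → z.1.1.1 ∈ d.Bn := fun z hz => ⟨z.1.2.1, Q0 z hz, z.2⟩
  have QE : ∀ z : d.R, z.1.1.2.2.2 ≤ 1/2 → (z.1.1.1, z.1.1.2.1) ∈ d.E1 := fun z hz => RE z (Q0 z hz)
  -- the map Σ
  have cl1 : IsClosed {z : d.Q | z.1.1.1.2.2.2 = 0} := isClosed_eq (by fun_prop) (by fun_prop)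
  have cl2 : IsClosed {z : d.Q | z.1.1.1.2.2.1 ∈ d.F ∧
      z.1.1.1.2.1 = d.gh (z.1.1.1.1, z.1.1.1.2.2.1)} := by
    apply IsClosed.inter
    · exact d.hFc.preimage (f := fun z : d.Q => z.1.1.1.2.2.1) (by fun_prop)
    · exact isClosed_eq (by fun_prop) (by fun_prop)
  obtain ⟨Sg, hS1, hS2⟩ := glue2 (X := d.Q) (Y := PS d.g d.c) (fun z => z.1.1.1.2.2.2 = 0)
    (fun z => z.1.1.1.2.2.1 ∈ d.F ∧ z.1.1.1.2.1 = d.gh (z.1.1.1.1, z.1.1.1.2.2.1)) cl1 cl2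
    (fun z => by
      by_cases h : z.1.1.1.2.2.2 = 0
      · exact Or.inl h
      · exact Or.inr (RF z.1 h))
    (s.comp ⟨fun z => ⟨⟨(z.1.1.1.1.1, z.1.1.1.1.2.1), QE z.1.1 z.1.2⟩, QB z.1.1 z.1.2⟩, by fun_prop⟩)
    (C.comp ⟨fun z => (PS.incl d.g d.c ⟨(⟨z.1.1.1.1.1, d.Bn_K (QB z.1.1 z.1.2)⟩, ⟨z.1.1.1.1.2.2.1, z.2.1⟩),
      QB z.1.1 z.1.2⟩, ⟨1 - 2 * z.1.1.1.1.2.2.2, by linarith [z.1.2], by linarith [Rr0 z.1.1]⟩), by fun_prop⟩)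
    (by
      intro z hp hq
      simp only [ContinuousMap.comp_apply, ContinuousMap.coe_mk]
      have e1 : (⟨1 - 2 * z.1.1.1.2.2.2, by linarith [z.2], by linarith [Rr0 z.1]⟩ : I) = 1 := by
        apply Subtype.ext; simp [hp]
      rw [e1, hC1]
      change s _ = s (d.g _)
      congr 1
      apply Subtype.ext; apply Subtype.ext
      rw [d.g_eq]
      exact Prod.ext rfl hq.2)
  have hSproj : ∀ z : d.Q, (PS.proj d.g d.c (Sg z)).1.1 = (z.1.1.1.1, z.1.1.1.2.1) := by
    intro z
    by_cases h : z.1.1.1.2.2.2 = 0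
    · rw [hS1 z h]; simp only [ContinuousMap.comp_apply]
      rw [hs]; rfl
    · have h' := RF z.1 h
      rw [hS2 z h']
      simp only [ContinuousMap.comp_apply, ContinuousMap.coe_mk]
      rw [hC2]
      change (d.g _).1.1 = _
      rw [d.g_eq]
      exact Prod.ext rfl h'.2.symm
  have hSfst : ∀ z : d.Q, (PS.pr d.g d.c (Sg z)).1.1.1 = z.1.1.1.1 := by
    intro z
    rw [← d.g_fst]
    refine (PS.proj_c d.g d.c (Sg z)).symm.trans ?_
    exact congrArg Prod.fst (hSproj z)
  have hSev : ∀ (z : d.Q) t, (PS.ev d.g d.c (Sg z, t)).1.1.1 = z.1.1.1.1 := by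
    intro z t
    refine (PS.ev_vert d.g d.c (Sg z) t).trans ?_
    rw [PS.ev_zero]
    change (d.g _).1.1.1 = _
    rw [d.g_fst, hSfst]
  have hShalf : ∀ z : d.Q, 1/2 ≤ z.1.1.1.2.2.2 → ∀ h', Sg z = PS.incl d.g d.c 
      ⟨(⟨z.1.1.1.1, d.Bn_K (QB z.1 z.2)⟩, ⟨z.1.1.1.2.2.1, h'⟩), QB z.1 z.2⟩ := by
    intro z hz h'
    have hh : z.1.1.1.2.2.2 = 1/2 := le_antisymm z.2 hz
    have h' := RF z.1 (by rw [hh]; norm_num)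
    rw [hS2 z h']
    simp only [ContinuousMap.comp_apply, ContinuousMap.coe_mk]
    have e1 : (⟨1 - 2 * z.1.1.1.2.2.2, by linarith [z.2], by linarith [Rr0 z.1]⟩ : I) = 0 := by
      apply Subtype.ext; simp [hh]
    rw [e1, hC0]; rfl
  -- the retraction
  have cl3 : IsClosed {z : d.R | z.1.1.2.2.2 ≤ 1/2} := isClosed_le (by fun_prop) (by fun_prop)
  have cl4 : IsClosed {z : d.R | 1/2 ≤ z.1.1.2.2.2} := isClosed_le (by fun_prop) (by fun_prop)
  obtain ⟨ρ, hρ1, hρ2⟩ := glue2 (X := d.R) (Y := {z : d.K × d.F // z.1.1 ∈ d.U2})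
    (fun z => z.1.1.2.2.2 ≤ 1/2) (fun z => 1/2 ≤ z.1.1.2.2.2) cl3 cl4 (fun z => le_total _ _)
    ⟨fun z => ⟨(PS.pr d.g d.c (Sg z)).1, (PS.pr d.g d.c (Sg z)).2.1, (PS.pr d.g d.c (Sg z)).2.2.2⟩, by fun_prop⟩
    ⟨fun z => ⟨(⟨z.1.1.1.1, d.h2 _ z.1.1.2.1 z.1.2.le⟩, ⟨z.1.1.1.2.2.1, (RF z.1 (by linarith [z.2])).1⟩),
      z.1.1.2.1, z.1.2⟩, by fun_prop⟩ (by
      intro z hp hq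
      simp only [ContinuousMap.coe_mk]
      apply Subtype.ext
      rw [hShalf ⟨z, hp⟩ hq (RF z (by linarith)).1]
      rfl)
  have hρfst : ∀ z : d.R, (ρ z).1.1.1 = z.1.1.1 := by
    intro z
    rcases le_total z.1.1.2.2.2 (1/2) with h | h
    · rw [hρ1 z h]; exact hSfst ⟨z, h⟩
    · rw [hρ2 z h]; rfl
  refine ⟨fun _ => rfl, ρ, hρfst, VH.of_eq ?_, VH.symm ?_⟩
  · intro z
    change ρ (d.inc z) = z
    rw [hρ2 (d.inc z) (by simp [inc]; norm_num)]
    rfl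
  -- step 1
  have e1mem : ∀ (z : d.R) (t : I), (z.1.1.1, z.1.1.2.1, z.1.1.2.2.1,
      (1 - (t : ℝ)) * z.1.1.2.2.2 + t * max 0 (2 * z.1.1.2.2.2 - 1)) ∈ d.E := by
    intro z t
    obtain ⟨⟨⟨x, e, y, r⟩, hx, hy, hr, h3, h4, h5⟩, h6⟩ := z
    have ht := t.2
    simp only at hx hy hr h3 h4 h5 h6 ⊢
    have hm0 : 0 ≤ max 0 (2 * r - 1) := le_max_left _ _
    have hm1 : max 0 (2 * r - 1) ≤ 1 := max_le zero_le_one (by linarith [hr.2])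
    refine ⟨hx, hy, ⟨?_, ?_⟩, h3, ?_, ?_⟩
    · have := hr.1; have := ht.1; have := ht.2
      have : 0 ≤ (1 - (t : ℝ)) * r := mul_nonneg (by linarith) hr.1
      have := mul_nonneg ht.1 hm0
      linarith
    · have a1 : (1 - (t : ℝ)) * r ≤ (1 - (t : ℝ)) * 1 := mul_le_mul_of_nonneg_left hr.2 (by linarith [ht.2])
      have a2 : (t : ℝ) * max 0 (2 * r - 1) ≤ t * 1 := mul_le_mul_of_nonneg_left hm1 ht.1
      simp only; linarith
    · rcases h4 with h4 | h4
      · exact Or.inl h4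
      · right; simp only at h4 ⊢; rw [h4]; norm_num
    · rcases h5 with h5 | h5
      · left; simp only at h5 ⊢; rw [h5]; norm_num
      · exact Or.inr h5
  let k1 : C(d.R × I, d.R) := ⟨fun w => ⟨⟨_, e1mem w.1 w.2⟩, w.1.2⟩, by fun_prop⟩
  -- step 2
  have e2mem : ∀ (z : d.R) (h : z.1.1.2.2.2 ≤ 1/2) (t : I), (z.1.1.1,
      (PS.ev d.g d.c (Sg ⟨z, h⟩, σ t)).1.1.2, (1 - (t : ℝ)) • z.1.1.2.2.1 +
      (t : ℝ) • (PS.pr d.g d.c (Sg ⟨z, h⟩)).1.2.1, (0 : ℝ)) ∈ d.E := by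
    intro z h t
    refine ⟨z.1.2.1, ?_, by simp, ?_, Or.inl (Q0 z h), Or.inl rfl⟩
    · exact d.hDc z.1.2.2.1 (d.hFD (PS.pr d.g d.c (Sg ⟨z, h⟩)).1.2.2) (by linarith [t.2.2]) t.2.1 (by ring)
    · intro _
      have := (PS.ev d.g d.c (Sg ⟨z, h⟩, σ t)).1.2
      convert this using 1
      exact Prod.ext (hSev ⟨z, h⟩ (σ t)).symm rfl
  have e2mem' : ∀ (z : d.R) (h : 1/2 ≤ z.1.1.2.2.2), (z.1.1.1, z.1.1.2.1, z.1.1.2.2.1,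
      2 * z.1.1.2.2.2 - 1) ∈ d.E := by
    intro z h
    have := e1mem z 1
    simpa [max_eq_right (show 0 ≤ 2 * z.1.1.2.2.2 - 1 by linarith)] using this
  have cl5 : IsClosed {z : d.R × I | z.1.1.1.2.2.2 ≤ 1/2} := isClosed_le (by fun_prop) (by fun_prop)
  have cl6 : IsClosed {z : d.R × I | 1/2 ≤ z.1.1.1.2.2.2} := isClosed_le (by fun_prop) (by fun_prop)
  obtain ⟨k2, hk21, hk22⟩ := glue2 (X := d.R × I) (Y := d.R) (fun z => z.1.1.1.2.2.2 ≤ 1/2)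
    (fun z => 1/2 ≤ z.1.1.1.2.2.2) cl5 cl6 (fun z => le_total _ _)
    ⟨fun w => ⟨⟨_, e2mem w.1.1 w.2 w.1.2⟩, w.1.1.2⟩, by
      apply Continuous.subtype_mk; apply Continuous.subtype_mk
      have cS : Continuous (fun x : {z : d.R × I // z.1.1.1.2.2.2 ≤ 1/2} => Sg ⟨x.1.1, x.2⟩) := by fun_prop
      fun_prop⟩
    ⟨fun w => ⟨⟨_, e2mem' w.1.1 w.2⟩, w.1.1.2⟩, by fun_prop⟩ (by
      rintro ⟨z, t⟩ hp hq
      have hF := (RF z (by simp only at hq; linarith))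
      apply Subtype.ext; apply Subtype.ext
      simp only [ContinuousMap.coe_mk]
      have hh : z.1.1.2.2.2 = 1/2 := le_antisymm hp hq
      have := hShalf ⟨z, hp⟩ hq hF.1
      rw [this]
      refine Prod.ext rfl (Prod.ext ?_ (Prod.ext ?_ ?_))
      · change (d.g _).1.1.2 = _
        rw [d.g_eq]; exact hF.2.symm
      · change (1 - (t : ℝ)) • z.1.1.2.2.1 + (t : ℝ) • z.1.1.2.2.1 = _
        rw [← add_smul]; simp
      · simp [hh])
  -- step 3
  have e3mem : ∀ (z : d.R) (t : I), ((ρ z).1.1.1, d.gh ((ρ z).1.1.1, (ρ z).1.2.1), (ρ z).1.2.1,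
      (1 - (t : ℝ)) * max 0 (2 * z.1.1.2.2.2 - 1) + t) ∈ d.E := by
    intro z t
    have ht := t.2
    have hm0 : 0 ≤ max 0 (2 * z.1.1.2.2.2 - 1) := le_max_left _ _
    have hm1 : max 0 (2 * z.1.1.2.2.2 - 1) ≤ 1 := max_le zero_le_one (by linarith [Rr1 z])
    refine d.j_mem _ (ρ z).2.1 (ρ z).2.2.le _ (ρ z).1.2.2 _ ⟨?_, ?_⟩ ?_
    · have := mul_nonneg (show 0 ≤ 1 - (t : ℝ) by linarith [ht.2]) hm0
      linarith [ht.1]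
    · have := mul_le_mul_of_nonneg_left hm1 (show 0 ≤ 1 - (t : ℝ) by linarith [ht.2])
      linarith
    · rw [hρfst]
      by_cases h : z.1.1.2.2.2 = 1
      · right; rw [h]; norm_num
      · left; exact R0 z h
  let k3 : C(d.R × I, d.R) := ⟨fun w => ⟨⟨_, e3mem w.1 w.2⟩, (ρ w.1).2.2⟩, by fun_prop⟩
  refine VH.trans (g := k1.comp ⟨fun z => (z, 1), by fun_prop⟩)
    ⟨k1, fun z => ?_, fun z => rfl, fun z t => rfl⟩ ?_
  · apply Subtype.ext; apply Subtype.ext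
    simp [k1]
    rfl
  refine VH.trans (g := k2.comp ⟨fun z => (z, 1), by fun_prop⟩)
    ⟨k2, fun z => ?_, fun z => rfl, fun z t => ?_⟩ ?_
  · apply Subtype.ext; apply Subtype.ext
    rcases le_total z.1.1.2.2.2 (1/2) with h | h
    · rw [hk21 _ h]
      simp only [k1, ContinuousMap.coe_mk, ContinuousMap.comp_apply]
      refine Prod.ext rfl (Prod.ext ?_ (Prod.ext ?_ ?_))
      · have := congrArg Prod.snd (hSproj ⟨z, h⟩)
        simp only at this ⊢
        rw [← this]
        simp only [symm_zero]
        rfl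
      · simp
      · simp; linarith
    · rw [hk22 _ h]
      simp only [k1, ContinuousMap.coe_mk, ContinuousMap.comp_apply]
      rw [max_eq_right (show 0 ≤ 2 * z.1.1.2.2.2 - 1 by linarith)]
      simp
  · rcases le_total z.1.1.2.2.2 (1/2) with h | h
    · rw [hk21 _ h]; rfl
    · rw [hk22 _ h]; rfl
  refine ⟨k3, fun z => ?_, fun z => ?_, fun z t => ?_⟩
  · apply Subtype.ext; apply Subtype.ext
    simp only [k3, ContinuousMap.coe_mk, ContinuousMap.comp_apply]
    rcases le_total z.1.1.2.2.2 (1/2) with h | h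
    · rw [hk21 _ h]
      simp only [ContinuousMap.coe_mk]
      refine Prod.ext (hρfst z) (Prod.ext ?_ (Prod.ext ?_ ?_))
      · simp only [symm_one]
        rw [PS.ev_zero, d.g_eq, hρ1 z h]
        rfl
      · rw [hρ1 z h]; simp
      · simp; linarith
    · rw [hk22 _ h, hρ2 z h]
      simp only [ContinuousMap.coe_mk]
      refine Prod.ext rfl (Prod.ext ?_ (Prod.ext rfl ?_))
      · exact (RF z (by linarith)).2.symm
      · simp; linarith
  · apply Subtype.ext; apply Subtype.ext
    simp only [k3, ContinuousMap.coe_mk, ContinuousMap.comp_apply, inc]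
    simp
  · change (ρ z).1.1.1 = ((k2 (z, 1))).1.1.1
    rw [hρfst]
    rcases le_total z.1.1.2.2.2 (1/2) with h | h
    · rw [hk21 _ h]; rfl
    · rw [hk22 _ h]; rfl

end SD
end AFib

namespace AFib
set_option linter.unusedSectionVars false

/-- clamp to the unit interval -/
noncomputable def c01 (s : ℝ) : I := Set.projIcc 0 1 zero_le_one s

@[fun_prop] theorem c01_cont : Continuous c01 := continuous_projIcc (h := zero_le_one)

theorem c01_one {s : ℝ} (h : 1 ≤ s) : c01 s = 1 := Set.projIcc_of_right_le _ h
theorem c01_zero {s : ℝ} (h : s ≤ 0) : c01 s = 0 := Set.projIcc_of_le_left _ h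

/-- the level homotopy -/
noncomputable def lam (l : ℝ) (t : I) : ℝ := (1 - (t : ℝ)) * l + t * min l 0

theorem lam_nonpos {l : ℝ} (h : l ≤ 0) (t : I) : lam l t = l := by
  rw [lam, min_eq_left h]; ring
theorem lam_zero (l : ℝ) : lam l 0 = l := by simp [lam]
theorem lam_one_le (l : ℝ) : lam l 1 ≤ 0 := by simp [lam]
theorem lam_le (l : ℝ) (t : I) : lam l t ≤ l := by
  have := mul_le_mul_of_nonneg_left (min_le_left l 0) t.2.1
  rw [lam]; linarith

namespace SD
variable {T V W Y : Type} [TopologicalSpace T] [TopologicalSpace V] [TopologicalSpace W]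
    [NormedAddCommGroup Y] [NormedSpace ℝ Y] [T2Space W] (d : SD T V W Y)

abbrev A : Type := {a // d.q a ∈ d.L}
abbrev A2 : Type := {a : d.A // d.l (d.q a.1) ≤ 2}

/-- to the part over K -/
def aK : C(d.A2, {a // d.q a ∈ d.K}) := ⟨fun a => ⟨a.1.1, d.h2 _ a.1.2 a.2⟩, by fun_prop⟩

theorem hv1 (a) : (d.v a).1.1 = d.q a.1 := d.hv.1 a
theorem hφ11 (a) : (d.φ1 a).1.1 = d.q a.1 := d.hφ1.1 a

theorem uv (a : {a // d.q a ∈ d.K}) (s : I) (hs : s = 1) (hL : d.q a.1 ∈ d.L) (h0 : 0 ≤ d.l (d.q a.1))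
    (h2 : d.l (d.q a.1) ≤ 2) (h : d.q (d.η (a, s)).1 ∈ d.L1) :
    (d.φ1 ⟨(d.η (a, s)).1, h⟩).1.2 = d.gh (d.q a.1, (d.v a).2.1) := by
  subst hs
  have e := d.η1 a
  have h' : d.q (d.u (d.v a)).1 ∈ d.L1 := by rw [← e]; exact h
  have e2 : (⟨(d.η (a, 1)).1, h⟩ : {a // d.q a ∈ d.L1}) = ⟨(d.u (d.v a)).1, h'⟩ := by
    apply Subtype.ext; simp only; rw [e]
  rw [e2]
  have := d.gh_eq (d.v a).1 (d.v a).2 (by rw [hv1]; exact hL) (by rw [hv1]; exact h0) 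
    (by rw [hv1]; exact h2) h'
  rw [this, hv1]

theorem exists_e : ∃ e : C(d.A2 × I, W),
    (∀ (a : d.A2) t (_ : 0 ≤ d.l (d.q a.1.1))
      (h : d.q (d.η (d.aK a, c01 (2 - lam (d.l (d.q a.1.1)) t))).1 ∈ d.L1),
      e (a, t) = (d.φ1 ⟨(d.η (d.aK a, c01 (2 - lam (d.l (d.q a.1.1)) t))).1, h⟩).1.2) ∧
    (∀ (a : d.A2) t, d.l (d.q a.1.1) ≤ 0 → e (a, t) = d.gh (d.q a.1.1, (d.v (d.aK a)).2.1)) := by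
  have hL1 : ∀ (a : d.A2) (s : I), 0 ≤ d.l (d.q a.1.1) → d.q (d.η (d.aK a, s)).1 ∈ d.L1 := by
    intro a s h; rw [d.ηq]; exact d.h1 _ a.1.2 h
  have cl1 : IsClosed {z : d.A2 × I | 0 ≤ d.l (d.q z.1.1.1)} := isClosed_le (by fun_prop) (by fun_prop)
  have cl2 : IsClosed {z : d.A2 × I | d.l (d.q z.1.1.1) ≤ 0} := isClosed_le (by fun_prop) (by fun_prop)
  obtain ⟨e, he1, he2⟩ := glue2 (X := d.A2 × I) (Y := W) (fun z => 0 ≤ d.l (d.q z.1.1.1))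
    (fun z => d.l (d.q z.1.1.1) ≤ 0) cl1 cl2 (fun z => le_total _ _)
    ⟨fun z => (d.φ1 ⟨(d.η (d.aK z.1.1, c01 (2 - lam (d.l (d.q z.1.1.1.1)) z.1.2))).1,
      hL1 z.1.1 _ z.2⟩).1.2, by unfold lam; fun_prop⟩
    ⟨fun z => d.gh (d.q z.1.1.1.1, (d.v (d.aK z.1.1)).2.1), by fun_prop⟩
    (by
      rintro ⟨a, t⟩ hp hq
      simp only [ContinuousMap.coe_mk]
      exact d.uv (d.aK a) _ (c01_one (by rw [lam_nonpos hq]; simp only at hq; linarith)) a.1.2 hp a.2 _)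
  exact ⟨e, fun a t h _ => he1 (a, t) h, fun a t h => he2 (a, t) h⟩

/-- the main homotopy -/
theorem exists_Ph : ∃ Ph : C(d.A2 × I, d.E),
    (∀ a t, (Ph (a, t)).1.1 = d.q a.1.1) ∧
    (∀ a t, (Ph (a, t)).1.2.2 = (((c01 (2 - lam (d.l (d.q a.1.1)) t) : I) : ℝ) • (d.v (d.aK a)).2.1,
      ((c01 (1 - lam (d.l (d.q a.1.1)) t) : I) : ℝ))) ∧
    (∀ (a : d.A2) t (_ : 0 ≤ d.l (d.q a.1.1))
      (h : d.q (d.η (d.aK a, c01 (2 - lam (d.l (d.q a.1.1)) t))).1 ∈ d.L1),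
      (Ph (a, t)).1.2.1 = (d.φ1 ⟨(d.η (d.aK a, c01 (2 - lam (d.l (d.q a.1.1)) t))).1, h⟩).1.2) ∧
    (∀ a, (Ph (a, 1)).1 = (d.q a.1.1, d.gh (d.q a.1.1, (d.v (d.aK a)).2.1), (d.v (d.aK a)).2.1, 1)) := by
  obtain ⟨e, he1, he2⟩ := d.exists_e
  have hL1 : ∀ (a : d.A2) (s : I), 0 ≤ d.l (d.q a.1.1) → d.q (d.η (d.aK a, s)).1 ∈ d.L1 := by
    intro a s h; rw [d.ηq]; exact d.h1 _ a.1.2 h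
  have he3 : ∀ (a : d.A2) t, lam (d.l (d.q a.1.1)) t ≤ 1 → 
      e (a, t) = d.gh (d.q a.1.1, (d.v (d.aK a)).2.1) := by
    intro a t h
    rcases le_total 0 (d.l (d.q a.1.1)) with h0 | h0
    · rw [he1 a t h0 (hL1 a _ h0)]
      exact d.uv (d.aK a) _ (c01_one (by linarith)) a.1.2 h0 a.2 _
    · exact he2 a t h0
  have mem : ∀ (a : d.A2) t, (d.q a.1.1, e (a, t),
      ((c01 (2 - lam (d.l (d.q a.1.1)) t) : I) : ℝ) • (d.v (d.aK a)).2.1,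
      ((c01 (1 - lam (d.l (d.q a.1.1)) t) : I) : ℝ)) ∈ d.E := by
    intro a t
    refine ⟨a.1.2, d.hDc.smul_mem_of_zero_mem d.hD0 (d.hFD (d.v (d.aK a)).2.2) (Subtype.prop _),
      Subtype.prop _, ?_, ?_, ?_⟩
    · intro h0
      simp only at h0 ⊢
      rw [he1 a t h0 (hL1 a _ h0)]
      have h3 := (d.φ1 ⟨_, hL1 a (c01 (2 - lam (d.l (d.q a.1.1)) t)) h0⟩).2
      convert h3 using 1
      refine Prod.ext ?_ rfl
      simp only
      rw [d.hφ11, d.ηq]; rfl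
    · rcases le_total 0 (d.l (d.q a.1.1)) with h0 | h0
      · exact Or.inl h0
      · right; simp only; rw [c01_one]; rfl
        rw [lam_nonpos h0]; linarith
    · rcases le_total 1 (lam (d.l (d.q a.1.1)) t) with h0 | h0
      · left; simp only; rw [c01_zero]; rfl
        linarith
      · right
        simp only
        rw [c01_one (s := 2 - _) (by linarith), Set.Icc.coe_one, one_smul]
        exact ⟨a.2, (d.v (d.aK a)).2.2, he3 a t h0⟩
  refine ⟨⟨fun z => ⟨_, mem z.1 z.2⟩, by
      apply Continuous.subtype_mk; unfold lam
      refine Continuous.prodMk (by fun_prop) (Continuous.prodMk e.continuous (Continuous.prodMk ?_ (by fun_prop)))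
      exact Continuous.smul (by fun_prop) (by fun_prop)⟩, fun a t => rfl, fun a t => rfl, 
    fun a t h0 h => he1 a t h0 h, fun a => ?_⟩
  have h1 := lam_one_le (d.l (d.q a.1.1))
  simp only [ContinuousMap.coe_mk]
  rw [he3 a 1 (by linarith), c01_one (s := 2 - _) (by linarith), c01_one (s := 1 - _) (by linarith)]
  simp

theorem exists_phi : ∃ φ : C(d.A, d.E), FHE (fun a => d.q a.1) (fun z => z.1.1) φ := by
  obtain ⟨Ph, P1, P2, P3, P4⟩ := d.exists_Ph
  have hL1 : ∀ (a : d.A), 0 ≤ d.l (d.q a.1) → d.q a.1 ∈ d.L1 := by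
    intro a h; exact d.h1 _ a.2 h
  have m2 : ∀ a : d.A, ∀ (h : 2 ≤ d.l (d.q a.1)), (d.q a.1, (d.φ1 ⟨a.1, hL1 a (by linarith)⟩).1.2, (0 : Y), (0 : ℝ)) ∈ d.E := by
    intro a h
    refine ⟨a.2, d.hD0, by simp, fun h0 => ?_, Or.inl (by simp only; linarith), Or.inl rfl⟩
    have h3 := (d.φ1 ⟨a.1, hL1 a (by linarith)⟩).2
    convert h3 using 1
    exact Prod.ext (d.hφ11 ⟨a.1, hL1 a (by linarith)⟩).symm rfl
  obtain ⟨φ, hφa, hφb⟩ := glue2 (X := d.A) (Y := d.E) (fun a => d.l (d.q a.1) ≤ 2) 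
    (fun a => 2 ≤ d.l (d.q a.1)) (isClosed_le (by fun_prop) (by fun_prop))
    (isClosed_le (by fun_prop) (by fun_prop)) (fun z => le_total _ _)
    ⟨fun a => Ph (a, 0), by fun_prop⟩
    ⟨fun a => ⟨_, m2 a.1 a.2⟩, by fun_prop⟩ (by
      intro a hp hq
      have hh : d.l (d.q a.1) = 2 := le_antisymm hp hq
      simp only [ContinuousMap.coe_mk]
      apply Subtype.ext
      have hs : c01 (2 - lam (d.l (d.q a.1)) 0) = 0 := c01_zero (by rw [lam_zero]; linarith)
      have hr : c01 (1 - lam (d.l (d.q a.1)) 0) = 0 := c01_zero (by rw [lam_zero]; linarith)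
      refine Prod.ext (P1 _ _) (Prod.ext ?_ ((P2 _ _).trans (by simp [hs, hr])))
      simp only
      have hm : d.q (d.η (d.aK ⟨a, hp⟩, c01 (2 - lam (d.l (d.q a.1)) 0))).1 ∈ d.L1 := by
        rw [d.ηq]; exact hL1 a (by linarith)
      rw [P3 ⟨a, hp⟩ 0 (by simp only; linarith) hm]
      congr 3
      apply Subtype.ext
      simp only
      rw [hs, d.η0]; rfl)
  have hφ0 : ∀ a, (φ a).1.1 = d.q a.1 := by
    intro a
    rcases le_total (d.l (d.q a.1)) 2 with h | h
    · rw [hφa a h]; exact P1 _ _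
    · rw [hφb a h]; rfl
  have hqc : Continuous (fun z : d.E => z.1.1) := by fun_prop
  refine ⟨φ, FHE.glue hqc φ hφ0 d.l (show (0 : ℝ) < 2 by norm_num) ?_ ?_⟩
  · -- upper part
    let k1 : C({z : d.E // z.1.1 ∈ {x | 0 < d.l x}}, {z : d.E1 // z.1.1 ∈ {x | 0 < d.l x}}) :=
      ⟨fun z => ⟨⟨(z.1.1.1, z.1.1.2.1), z.1.2.2.2.2.1 (le_of_lt z.2)⟩, z.2⟩, by fun_prop⟩
    have im : ∀ z : {z : d.E1 // z.1.1 ∈ {x | 0 < d.l x}}, (z.1.1.1, z.1.1.2, (0 : Y), (0 : ℝ)) ∈ d.E :=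
      fun z => ⟨d.hL1 (d.hE1 _ z.1.2), d.hD0, by simp, fun _ => z.1.2, Or.inl (le_of_lt z.2), Or.inl rfl⟩
    let i1 : C({z : d.E1 // z.1.1 ∈ {x | 0 < d.l x}}, {z : d.E // z.1.1 ∈ {x | 0 < d.l x}}) :=
      ⟨fun z => ⟨⟨_, im z⟩, z.2⟩, by fun_prop⟩
    have am : ∀ (z : {z : d.E // z.1.1 ∈ {x | 0 < d.l x}}) (t : I), (z.1.1.1, z.1.1.2.1, z.1.1.2.2.1,
        (1 - (t : ℝ)) * z.1.1.2.2.2) ∈ d.E := by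
      intro z t
      obtain ⟨⟨⟨x, e, y, r⟩, hx, hy, hr, h3, h4, h5⟩, h6⟩ := z
      refine ⟨hx, hy, ⟨mul_nonneg (by linarith [t.2.2]) hr.1, ?_⟩, h3, Or.inl (le_of_lt h6), ?_⟩
      · exact mul_le_one₀ (by linarith [t.2.1]) hr.1 hr.2
      · rcases h5 with h5 | h5
        · left; simp only at h5 ⊢; rw [h5]; simp
        · exact Or.inr h5
    have bm : ∀ (z : {z : d.E // z.1.1 ∈ {x | 0 < d.l x}}) (t : I), (z.1.1.1, z.1.1.2.1, 
        (1 - (t : ℝ)) • z.1.1.2.2.1, (0 : ℝ)) ∈ d.E := by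
      intro z t
      refine ⟨z.1.2.1, d.hDc.smul_mem_of_zero_mem d.hD0 z.1.2.2.1 ⟨by linarith [t.2.2], by linarith [t.2.1]⟩,
        by simp, z.1.2.2.2.2.1, Or.inl (le_of_lt z.2), Or.inl rfl⟩
    have hk1 : FHE (fun z => z.1.1.1) (fun z => z.1.1.1) k1 := by
      refine ⟨fun _ => rfl, i1, fun _ => rfl, VH.symm ?_, VH.of_eq (fun _ => rfl)⟩
      let ka : C({z : d.E // z.1.1 ∈ {x | 0 < d.l x}} × I, {z : d.E // z.1.1 ∈ {x | 0 < d.l x}}) :=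
        ⟨fun w => ⟨⟨_, am w.1 w.2⟩, w.1.2⟩, by fun_prop⟩
      let kb : C({z : d.E // z.1.1 ∈ {x | 0 < d.l x}} × I, {z : d.E // z.1.1 ∈ {x | 0 < d.l x}}) :=
        ⟨fun w => ⟨⟨_, bm w.1 w.2⟩, w.1.2⟩, by fun_prop⟩
      refine VH.trans (g := ka.comp ⟨fun z => (z, 1), by fun_prop⟩)
        ⟨ka, fun z => ?_, fun z => rfl, fun z t => rfl⟩ ⟨kb, fun z => ?_, fun z => ?_, fun z t => rfl⟩
      · apply Subtype.ext; apply Subtype.ext; simp [ka]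
      · apply Subtype.ext; apply Subtype.ext; simp [ka, kb]
      · apply Subtype.ext; apply Subtype.ext; simp [kb, i1, k1]
    refine FHE.of_comp_left (χ := k1) ?_ hk1 (fun a => hφ0 a.1)
    let rb : C({a : d.A // d.q a.1 ∈ {x | 0 < d.l x}}, {a : {a // d.q a ∈ d.L1} // d.q a.1 ∈ {x | 0 < d.l x}}) :=
      ⟨fun a => ⟨⟨a.1.1, hL1 a.1 (le_of_lt a.2)⟩, a.2⟩, by fun_prop⟩
    let rb' : C({a : {a // d.q a ∈ d.L1} // d.q a.1 ∈ {x | 0 < d.l x}}, {a : d.A // d.q a.1 ∈ {x | 0 < d.l x}}) :=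
      ⟨fun a => ⟨⟨a.1.1, d.hL1 a.1.2⟩, a.2⟩, by fun_prop⟩
    have hrb : FHE (fun a => d.q a.1.1) (fun a => d.q a.1.1) rb :=
      FHE.of_inv rb rb' (fun _ => rfl) (fun _ => rfl) (fun _ => rfl)
    refine ((d.hφ1.res {x | 0 < d.l x}).comp hrb).congr ?_
    have hηm : ∀ (a : {a : d.A // d.q a.1 ∈ {x | 0 < d.l x}}) (h : d.l (d.q a.1.1) ≤ 2) (s : I),
        d.q (d.η (d.aK ⟨a.1, h⟩, s)).1 ∈ d.L1 := by
      intro a h s; rw [d.ηq]; exact hL1 a.1 (le_of_lt a.2)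
    obtain ⟨ζ, hζ1, hζ2⟩ := glue2 (X := {a : d.A // d.q a.1 ∈ {x | 0 < d.l x}} × I) 
      (Y := {a // d.q a ∈ d.L1}) (fun a => d.l (d.q a.1.1.1) ≤ 2) 
      (fun a => 2 ≤ d.l (d.q a.1.1.1)) (isClosed_le (by fun_prop) (by fun_prop))
      (isClosed_le (by fun_prop) (by fun_prop)) (fun z => le_total _ _)
      ⟨fun a => ⟨(d.η (d.aK ⟨a.1.1.1, a.2⟩, a.1.2 * c01 (2 - d.l (d.q a.1.1.1.1)))).1, hηm a.1.1 a.2 _⟩, by fun_prop⟩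
      ⟨fun a => ⟨a.1.1.1.1, hL1 a.1.1.1 (le_of_lt a.1.1.2)⟩, by fun_prop⟩ (by
        rintro ⟨a, t⟩ hp hq
        apply Subtype.ext
        simp only [ContinuousMap.coe_mk]
        rw [c01_zero (by simp only at hq; linarith), mul_zero, d.η0]; rfl)
    have hζq : ∀ a t, d.q (ζ (a, t)).1 = d.q a.1.1 := by
      intro a t
      rcases le_total (d.l (d.q a.1.1)) 2 with h | h
      · rw [hζ1 (a, t) h]; exact d.ηq _ _
      · rw [hζ2 (a, t) h]; rfl
    have hζm : ∀ a t, (d.φ1 (ζ (a, t))).1.1 ∈ {x | 0 < d.l x} := by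
      intro a t; rw [d.hφ11, hζq]; exact a.2
    refine ⟨⟨fun w => ⟨d.φ1 (ζ w), hζm w.1 w.2⟩, by fun_prop⟩, fun a => ?_, fun a => ?_, fun a t => ?_⟩
    · apply Subtype.ext
      change d.φ1 _ = d.φ1 _
      congr 1
      apply Subtype.ext
      rcases le_total (d.l (d.q a.1.1)) 2 with h | h
      · rw [hζ1 (a, 0) h]
        simp only [ContinuousMap.coe_mk]
        rw [zero_mul, d.η0]; rfl
      · rw [hζ2 (a, 0) h]; rfl
    · apply Subtype.ext; apply Subtype.ext
      change (d.φ1 (ζ (a, 1))).1 = ((φ a.1).1.1, (φ a.1).1.2.1)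
      refine Prod.ext ?_ ?_
      · simp only; rw [d.hφ11, hζq, hφ0]
      · simp only
        rcases le_total (d.l (d.q a.1.1)) 2 with h | h
        · rw [hζ1 (a, 1) h, hφa _ h]
          simp only [ContinuousMap.coe_mk]
          rw [P3 ⟨a.1, h⟩ 0 (le_of_lt a.2) (hηm a h _)]
          congr 3
          apply Subtype.ext
          simp only [lam_zero, one_mul]
        · rw [hζ2 (a, 1) h, hφb _ h]; rfl
    · change (d.φ1 (ζ (a, t))).1.1 = (d.φ1 (rb a).1).1.1
      rw [d.hφ11, hζq, d.hφ11]; rfl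
  · -- lower part
    let rb : C({a : d.A // d.q a.1 ∈ {x | d.l x < 2}}, {a : {a // d.q a ∈ d.K} // d.q a.1 ∈ d.U2}) :=
      ⟨fun a => ⟨⟨a.1.1, d.h2 _ a.1.2 (le_of_lt a.2)⟩, a.1.2, a.2⟩, by fun_prop⟩
    let rb' : C({a : {a // d.q a ∈ d.K} // d.q a.1 ∈ d.U2}, {a : d.A // d.q a.1 ∈ {x | d.l x < 2}}) :=
      ⟨fun a => ⟨⟨a.1.1, a.2.1⟩, a.2.2⟩, by fun_prop⟩
    have hrb : FHE (fun a => d.q a.1.1) (fun a => d.q a.1.1) rb :=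
      FHE.of_inv rb rb' (fun _ => rfl) (fun _ => rfl) (fun _ => rfl)
    refine ((d.inc_fhe.comp (d.hv.res d.U2)).comp hrb).congr (VH.symm ?_)
    have hm : ∀ (a : {a : d.A // d.q a.1 ∈ {x | d.l x < 2}}) (t : I),
        (Ph (⟨a.1, le_of_lt a.2⟩, t)).1.1 ∈ {x | d.l x < 2} := by
      intro a t; rw [P1]; exact a.2
    refine ⟨⟨fun w => ⟨Ph (⟨w.1.1, le_of_lt w.1.2⟩, w.2), hm w.1 w.2⟩, by fun_prop⟩, 
      fun a => ?_, fun a => ?_, fun a t => ?_⟩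
    · apply Subtype.ext
      exact (hφa a.1 (le_of_lt a.2)).symm
    · apply Subtype.ext; apply Subtype.ext
      refine (P4 ⟨a.1, le_of_lt a.2⟩).trans ?_
      have h := d.hv1 (rb a).1
      change _ = ((d.v (rb a).1).1.1, d.gh ((d.v (rb a).1).1.1, (d.v (rb a).1).2.1), (d.v (rb a).1).2.1, 1)
      rw [h]; rfl
    · change (Ph (_, t)).1.1 = (φ a.1).1.1
      rw [P1, hφ0]

end SD
end AFib

namespace AFib
set_option linter.unusedSectionVars false

/-- the graph piece -/
def JJ {V W Y : Type} (F : Set Y) (gh : V × Y → W) (X : Set V) (R : Set ℝ) : Set (V × W × Y × ℝ) :=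
  {z | z.1 ∈ X ∧ z.2.2.1 ∈ F ∧ z.2.1 = gh (z.1, z.2.2.1) ∧ z.2.2.2 ∈ R}

section
variable {V W Y : Type} [TopologicalSpace V] [TopologicalSpace W] [TopologicalSpace Y]

theorem JJ.ane {F : Set Y} {gh : V × Y → W} (hg : Continuous gh) {X : Set V} {R : Set ℝ}
    (hX : ANE X) (hF : ANE F) (hR : ANE R) : ANE (JJ F gh X R) := by
  refine (hX.prod (hF.prod hR)).retract (fun p => (p.1, gh (p.1, p.2.1), p.2.1, p.2.2))
    (fun z => (z.1, z.2.2.1, z.2.2.2)) (by fun_prop) (by fun_prop) ?_ ?_ ?_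
  · rintro ⟨x, y, r⟩ ⟨h1, h2, h3⟩; exact ⟨h1, h2, rfl, h3⟩
  · rintro ⟨x, e, y, r⟩ ⟨h1, h2, h4, h3⟩; exact ⟨h1, h2, h3⟩
  · rintro ⟨x, e, y, r⟩ ⟨h1, h2, h4, h3⟩
    simp only at h4 ⊢; rw [h4]

theorem JJ.compact {F : Set Y} {gh : V × Y → W} (hg : Continuous gh) {X : Set V} {R : Set ℝ}
    (hX : IsCompact X) (hF : IsCompact F) (hR : IsCompact R) : IsCompact (JJ F gh X R) := by
  have : JJ F gh X R = (fun p : V × Y × ℝ => (p.1, gh (p.1, p.2.1), p.2.1, p.2.2)) '' (X ×ˢ F ×ˢ R) := by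
    ext ⟨x, e, y, r⟩
    constructor
    · rintro ⟨h1, h2, h4, h3⟩
      exact ⟨(x, y, r), ⟨h1, h2, h3⟩, by simp only at h4 ⊢; rw [h4]⟩
    · rintro ⟨⟨x', y', r'⟩, ⟨h1, h2, h3⟩, h⟩
      simp only [Prod.mk.injEq] at h
      obtain ⟨rfl, rfl, rfl, rfl⟩ := h
      exact ⟨h1, h2, rfl, h3⟩
  rw [this]
  exact (hX.prod (hF.prod hR)).image (by fun_prop)

/-- the cylinder-free piece -/
def PP (E : Set (V × W)) (D : Set Y) : Set (V × W × Y × ℝ) :=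
  {z | (z.1, z.2.1) ∈ E ∧ z.2.2.1 ∈ D ∧ z.2.2.2 = 0}

theorem PP.ane {E : Set (V × W)} {D : Set Y} (hE : ANE E) (hD : ANE D) : ANE (PP E D) := by
  refine (hE.prod hD).retract (fun p => (p.1.1, p.1.2, p.2, (0 : ℝ)))
    (fun z => ((z.1, z.2.1), z.2.2.1)) (by fun_prop) (by fun_prop) ?_ ?_ ?_
  · rintro ⟨⟨x, e⟩, y⟩ ⟨h1, h2⟩; exact ⟨h1, h2, rfl⟩
  · rintro ⟨x, e, y, r⟩ ⟨h1, h2, h3⟩; exact ⟨h1, h2⟩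
  · rintro ⟨x, e, y, r⟩ ⟨h1, h2, h4⟩
    simp only at h4 ⊢; rw [h4]

theorem PP.compact {E : Set (V × W)} {D : Set Y} (hE : IsCompact E) (hD : IsCompact D) :
    IsCompact (PP E D) := by
  have : PP E D = (fun p : (V × W) × Y => (p.1.1, p.1.2, p.2, (0 : ℝ))) '' (E ×ˢ D) := by
    ext ⟨x, e, y, r⟩
    constructor
    · rintro ⟨h1, h2, h4⟩
      exact ⟨((x, e), y), ⟨h1, h2⟩, by simp only at h4 ⊢; rw [h4]⟩
    · rintro ⟨⟨⟨x', e'⟩, y'⟩, ⟨h1, h2⟩, h⟩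
      simp only [Prod.mk.injEq] at h
      obtain ⟨rfl, rfl, rfl, rfl⟩ := h
      exact ⟨h1, h2, rfl⟩
  rw [this]
  exact (hE.prod hD).image (by fun_prop)
end

section good
variable {T V : Type} [TopologicalSpace T] [NormedAddCommGroup V] [NormedSpace ℝ V]
  [FiniteDimensional ℝ V]

/-- over `L` the map `q` has a compact ANR model -/
def Good (q : C(T, V)) (L : Set V) : Prop :=
  ∃ (W : Type) (_ : NormedAddCommGroup W) (_ : NormedSpace ℝ W) (_ : FiniteDimensional ℝ W)
    (E : Set (V × W)), IsCompact E ∧ (∀ z ∈ E, z.1 ∈ L) ∧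
    (∀ L', Nice L' → ANE (E ∩ {z | z.1 ∈ L'})) ∧
    ∃ φ : C({a // q a ∈ L}, E), FHE (fun a => q a.1) (fun z => z.1.1) φ

theorem Good.empty (q : C(T, V)) : Good q ∅ := by
  have h1 : IsEmpty {a // q a ∈ (∅ : Set V)} := ⟨fun a => a.2⟩
  have h2 : IsEmpty (∅ : Set (V × ℝ)) := ⟨fun a => a.2⟩
  refine ⟨ℝ, inferInstance, inferInstance, inferInstance, ∅, isCompact_empty, by simp, ?_, ?_⟩
  · intro L' _; simpa using ANE.empty
  · refine ⟨⟨fun a => isEmptyElim a, ?_⟩, FHE.of_inv _ ⟨fun a => isEmptyElim a, ?_⟩ ?_ ?_ ?_⟩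
    · exact continuous_of_const fun a => isEmptyElim a
    · exact continuous_of_const fun a => isEmptyElim a
    all_goals exact fun a => isEmptyElim a

theorem Good.step {q : C(T, V)} {L1 L K : Set V} (hL : Nice L) (hsub : L1 ⊆ L)
    (l : V → ℝ) (hl : NiceFn l) (h1 : ∀ x ∈ L, 0 ≤ l x → x ∈ L1) (h2 : ∀ x ∈ L, l x ≤ 2 → x ∈ K)
    {m : ℕ} {F : Set (Fin m → ℝ)} (hFc : IsCompact F) (hF : ANE F)
    (u : C(K × F, {a // q a ∈ K})) (hu : FHE (fun z => z.1.1) (fun a => q a.1) u)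
    (hG : Good q L1) : Good q L := by
  obtain ⟨W, _, _, _, E1, hE1c, hE1, hE1A, φ1, hφ1⟩ := hG
  have hφ11 : ∀ a, (φ1 a).1.1 = q a.1 := hφ1.1
  have hu1 : ∀ z, q (u z).1 = z.1.1 := hu.1
  obtain ⟨v, hv, hvu, huv⟩ := hu.exists_inv
  obtain ⟨η, η0, η1, η2⟩ := huv.symm
  obtain ⟨R, hR0, hR⟩ := hFc.isBounded.subset_closedBall_lt 0 (0 : Fin m → ℝ)
  -- extension of the graph map
  let Bc : Set (V × (Fin m → ℝ)) := (L ∩ {x | 0 ≤ l x} ∩ {x | l x ≤ 2}) ×ˢ F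
  have hband : ∀ {L'}, Nice L' → Nice (L' ∩ {x | 0 ≤ l x} ∩ {x | l x ≤ 2}) := fun h =>
    hl.le _ 2 (hl.ge _ 0 h)
  have hBc : IsClosed Bc := ((hband hL).isCompact.prod hFc).isClosed
  have hK : ∀ z : Bc, z.1.1 ∈ K := fun z => h2 _ z.2.1.1.1 z.2.1.2
  have hB1 : ∀ z : Bc, q (u (⟨z.1.1, hK z⟩, ⟨z.1.2, z.2.2⟩)).1 ∈ L1 := fun z => by
    rw [hu1]; exact h1 _ z.2.1.1.1 z.2.1.1.2
  have : TietzeExtension.{0, 0} W := TietzeExtension.of_tvs ℝ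
  obtain ⟨gh, hgh⟩ := ContinuousMap.exists_restrict_eq hBc
    (⟨fun z => (φ1 ⟨(u (⟨z.1.1, hK z⟩, ⟨z.1.2, z.2.2⟩)).1, hB1 z⟩).1.2, by fun_prop⟩ : C(Bc, W))
  let d : SD T V W (Fin m → ℝ) :=
    { q := q, L1 := L1, L := L, K := K, l := ⟨l, hl.cont⟩, F := F, D := Metric.closedBall 0 R
      E1 := E1, φ1 := φ1, u := u, v := v, η := η, gh := gh, h1 := h1, hL1 := hsub, h2 := h2
      hE1 := hE1, hφ1 := hφ1, hu := hu, hv := hv, η0 := η0, η1 := η1, ηq := η2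
      hgh := fun x y hx hxL h0 h2' => by
        have := DFunLike.congr_fun hgh ⟨(x.1, y.1), ⟨⟨hxL, h0⟩, h2'⟩, y.2⟩
        exact this
      hFD := hR, hFc := hFc.isClosed, hD0 := by simp [hR0.le], hDc := convex_closedBall _ _ }
  obtain ⟨φ, hφ⟩ := d.exists_phi
  have key : ∀ L', Nice L' → IsCompact (d.E ∩ {z | z.1 ∈ L'}) ∧ ANE (d.E ∩ {z | z.1 ∈ L'}) := by
    intro L' hL'
    have hLL : Nice (L ∩ L') := hL.inter hL'
    have n0 := hl.ge _ 0 hLL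
    have n2 := hl.le _ 2 hLL
    have nb := hband hLL
    let P1 := PP (Y := Fin m → ℝ) (E1 ∩ {z | z.1 ∈ L ∩ L' ∩ {x | 0 ≤ l x}}) (Metric.closedBall 0 R)
    let P2 := JJ F gh (L ∩ L' ∩ {x | 0 ≤ l x} ∩ {x | l x ≤ 2}) (Set.Icc 0 1)
    let P3 := JJ F gh (L ∩ L' ∩ {x | l x ≤ 2}) {1}
    have e : d.E ∩ {z | z.1 ∈ L'} = (P1 ∪ P2) ∪ P3 := by
      ext ⟨x, e, y, r⟩
      constructor
      · rintro ⟨⟨hx, hy, hr, h3, h4, h5⟩, hx'⟩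
        change x ∈ L' at hx'
        change x ∈ L at hx
        rcases h5 with h5 | h5
        · have h0 : 0 ≤ l x := by
            rcases h4 with h4 | h4
            · exact h4
            · change r = 0 at h5; change r = 1 at h4; linarith
          left; left; exact ⟨⟨h3 h0, ⟨hx, hx'⟩, h0⟩, hy, h5⟩
        · rcases h4 with h4 | h4
          · left; right; exact ⟨⟨⟨⟨hx, hx'⟩, h4⟩, h5.1⟩, h5.2.1, h5.2.2, hr⟩
          · right; exact ⟨⟨⟨hx, hx'⟩, h5.1⟩, h5.2.1, h5.2.2, h4⟩
      · rintro ((⟨⟨h1, h2, h3⟩, h4, h5⟩ | ⟨⟨⟨h1, h2⟩, h3⟩, h4, h5, h6⟩) | ⟨⟨h1, h2⟩, h4, h5, h6⟩)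
        · change r = 0 at h5
          subst h5
          exact ⟨⟨h2.1, h4, by simp, fun _ => h1, Or.inl h3, Or.inl rfl⟩, h2.2⟩
        · change e = gh (x, y) at h5
          subst h5
          exact ⟨d.j_mem x h1.1 h3 y h4 r h6 (Or.inl h2), h1.2⟩
        · change e = gh (x, y) at h5
          subst h5
          change r = 1 at h6
          subst h6
          exact ⟨d.j_mem x h1.1 h2 y h4 1 (by simp) (Or.inr rfl), h1.2⟩
    have i1 : P1 ∩ P2 = JJ F gh (L ∩ L' ∩ {x | 0 ≤ l x} ∩ {x | l x ≤ 2}) {0} := by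
      ext ⟨x, e, y, r⟩
      constructor
      · rintro ⟨⟨_, _, h5⟩, ⟨h1, h2, h3, h4⟩⟩
        exact ⟨h1, h2, h3, h5⟩
      · rintro ⟨h1, h2, h3, h4⟩
        change r = 0 at h4
        subst h4
        change e = gh (x, y) at h3
        subst h3
        exact ⟨⟨⟨d.gh_mem x h1.1.1.1 h1.1.2 h1.2 y h2, h1.1⟩, hR h2, rfl⟩, ⟨h1, h2, rfl, by simp⟩⟩
    have i2 : (P1 ∪ P2) ∩ P3 = JJ F gh (L ∩ L' ∩ {x | 0 ≤ l x} ∩ {x | l x ≤ 2}) {1} := by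
      ext ⟨x, e, y, r⟩
      constructor
      · rintro ⟨⟨_, _, h5⟩ | ⟨h1, h2, h3, h4⟩, ⟨h1', h2', h3', h4'⟩⟩
        · change r = 0 at h5; change r = 1 at h4'; linarith
        · exact ⟨h1, h2, h3, h4'⟩
      · rintro ⟨h1, h2, h3, h4⟩
        refine ⟨Or.inr ⟨h1, h2, h3, ?_⟩, ⟨h1.1.1, h1.2⟩, h2, h3, h4⟩
        change r = 1 at h4
        subst h4; simp
    have aI : ANE (Set.Icc (0 : ℝ) 1) := ANE.convex isClosed_Icc (convex_Icc _ _)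
    have aS : ∀ s : ℝ, ANE ({s} : Set ℝ) := fun s => ANE.convex isClosed_singleton (convex_singleton _)
    have k1 : IsCompact P1 := PP.compact (hE1c.inter_right
      (n0.isCompact.isClosed.preimage continuous_fst)) (isCompact_closedBall _ _)
    have k2 : IsCompact P2 := JJ.compact gh.continuous nb.isCompact hFc isCompact_Icc
    have k3 : IsCompact P3 := JJ.compact gh.continuous n2.isCompact hFc isCompact_singleton
    have a1 : ANE P1 := PP.ane (hE1A _ n0) (ANE.convex Metric.isClosed_closedBall (convex_closedBall _ _))
    have a2 : ANE P2 := JJ.ane gh.continuous nb.ane hF aI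
    have a3 : ANE P3 := JJ.ane gh.continuous n2.ane hF (aS 1)
    rw [e]
    refine ⟨(k1.union k2).union k3, ?_⟩
    refine ANE.union (k1.union k2).isClosed k3.isClosed (ANE.union k1.isClosed k2.isClosed a1 a2 ?_) a3 ?_
    · rw [i1]; exact JJ.ane gh.continuous nb.ane hF (aS 0)
    · rw [i2]; exact JJ.ane gh.continuous nb.ane hF (aS 1)
  refine ⟨W × (Fin m → ℝ) × ℝ, inferInstance, inferInstance, inferInstance, d.E, ?_, ?_, ?_, φ, hφ⟩
  · have := (key L hL).1
    rwa [Set.inter_eq_left.2 (fun z hz => hz.1)] at this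
  · exact fun z hz => hz.1
  · exact fun L' hL' => (key L' hL').2

end good
end AFib

namespace AFib
set_option linter.unusedSectionVars false

theorem NiceFn.affine {V : Type} [NormedAddCommGroup V] [NormedSpace ℝ V] [FiniteDimensional ℝ V]
    {l : V → ℝ} (hl : NiceFn l) (s : ℝ) {k : ℝ} (hk : 0 < k) :
    NiceFn (fun x => (l x - s) * k) := by
  have hc := hl.cont
  refine ⟨by fun_prop, fun X t hX => ?_, fun X t hX => ?_⟩
  · have e : {x | (l x - s) * k ≤ t} = {x | l x ≤ t / k + s} := by
      ext x; change (l x - s) * k ≤ t ↔ l x ≤ t / k + s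
      rw [← le_div_iff₀ hk]; constructor <;> intro h <;> linarith
    rw [e]; exact hl.le X _ hX
  · have e : {x | t ≤ (l x - s) * k} = {x | t / k + s ≤ l x} := by
      ext x; change t ≤ (l x - s) * k ↔ t / k + s ≤ l x
      rw [← div_le_iff₀ hk]; constructor <;> intro h <;> linarith
    rw [e]; exact hl.ge X _ hX

section
variable {T B : Type} [TopologicalSpace T] [TopologicalSpace B] {n : ℕ}

theorem local_triv (π : C(T, B)) (hπ : VHLP π (fun _ : B => ())) (ι : C(B, Fin n → ℝ))
    (hι : Function.Injective ι) (S : Set (Fin n → ℝ)) (hS : Nice S) (j : C(S, B))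
    (hj : ∀ x, ι (j x) = x.1)
    (hF : ∀ b : B, ∃ (m : ℕ) (F : Set (Fin m → ℝ)), Nice F ∧
      Nonempty (ContinuousMap.HomotopyEquiv F {a // π a = b}))
    (c : Fin n → ℝ) (hc : c ∈ S) :
    ∃ ε : ℝ, 0 < ε ∧ ∃ (m : ℕ) (F : Set (Fin m → ℝ)), Nice F ∧
      ∃ u : C((S ∩ Metric.closedBall c ε : Set (Fin n → ℝ)) × F,
        {a // ι (π a) ∈ S ∩ Metric.closedBall c ε}),
        FHE (fun z => z.1.1) (fun a => ι (π a.1)) u := by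
  obtain ⟨O, r, hO, hSO, hr, hrS, hrid⟩ := hS.ane (Fin n → ℝ) S id hS.isCompact.isClosed
    continuousOn_id (fun x hx => hx)
  obtain ⟨ε, hε, hεO⟩ := Metric.nhds_basis_closedBall.mem_iff.1 (hO.mem_nhds (hSO hc))
  obtain ⟨m, F, hFn, ⟨e⟩⟩ := hF (j ⟨c, hc⟩)
  refine ⟨ε, hε, m, F, hFn, ?_⟩
  have hm : ∀ (x : (S ∩ Metric.closedBall c ε : Set (Fin n → ℝ))) (t : I),
      (1 - (t : ℝ)) • x.1 + (t : ℝ) • c ∈ O := fun x t =>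
    hεO (convex_closedBall c ε x.2.2 (Metric.mem_closedBall_self hε.le) (by linarith [t.2.2]) t.2.1 (by ring))
  have hrc : Continuous (fun x : O => r x.1) := continuousOn_iff_continuous_domRestrict.1 hr
  let k : C((S ∩ Metric.closedBall c ε : Set (Fin n → ℝ)) × I, O) := ⟨fun w => ⟨_, hm w.1 w.2⟩, by fun_prop⟩
  let r' : C(O, S) := ⟨fun x => ⟨r x.1, hrS x.2⟩, hrc.subtype_mk _⟩
  refine triv' π hπ ι hι _ (j.comp ⟨fun x => ⟨x.1, x.2.1⟩, by fun_prop⟩) (fun x => hj _) (j ⟨c, hc⟩)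
    (j.comp (r'.comp k)) ?_ ?_ e
  · intro x
    simp only [ContinuousMap.comp_apply, ContinuousMap.coe_mk]
    congr 1
    apply Subtype.ext
    simp only [r', k, ContinuousMap.coe_mk]
    simpa using hrid x.2.1
  · intro x
    simp only [ContinuousMap.comp_apply]
    congr 1
    apply Subtype.ext
    simp only [r', k, ContinuousMap.coe_mk]
    simpa using hrid hc

theorem good_all (π : C(T, B)) (hπ : VHLP π (fun _ : B => ())) (ι : C(B, Fin n → ℝ))
    (hι : Function.Injective ι) (S : Set (Fin n → ℝ)) (hS : Nice S) (j : C(S, B))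
    (hj : ∀ x, ι (j x) = x.1)
    (hF : ∀ b : B, ∃ (m : ℕ) (F : Set (Fin m → ℝ)), Nice F ∧
      Nonempty (ContinuousMap.HomotopyEquiv F {a // π a = b})) :
    Good (ι.comp π) S := by
  classical
  have loc := local_triv π hπ ι hι S hS j hj hF
  choose! ε hε m F hFn u hu using loc
  obtain ⟨t, htS, hcov⟩ := hS.isCompact.elim_nhds_subcover (fun c => Metric.closedBall c (ε c / 2))
    (fun c hc => Metric.closedBall_mem_nhds c (half_pos (hε c hc)))
  have main : ∀ t : Finset (Fin n → ℝ), (∀ c ∈ t, c ∈ S) →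
      Good (ι.comp π) (⋃ c ∈ t, S ∩ Metric.closedBall c (ε c / 2)) := by
    intro t
    induction t using Finset.induction_on with
    | empty => intro _; simpa using Good.empty (ι.comp π)
    | insert c t hct ih =>
      intro hS'
      have hc : c ∈ S := hS' c (by simp)
      have e0 := hε c hc
      have nc : ∀ c r, Nice (S ∩ Metric.closedBall c r) := fun c r =>
        hS.inter_convex Metric.isClosed_closedBall (convex_closedBall _ _)
      rw [Finset.set_biUnion_insert]
      refine Good.step (L1 := ⋃ c ∈ t, S ∩ Metric.closedBall c (ε c / 2)) ?_ Set.subset_union_right _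
        ((NiceFn.rad c).affine (3 * ε c / 4) (k := 8 / ε c) (by positivity)) ?_ ?_
        (hFn c hc).isCompact (hFn c hc).ane (u c hc) (hu c hc) (ih fun x hx => hS' x (by simp [hx]))
      · exact (nc _ _).union (Nice.biUnion _ _ fun i _ => nc _ _)
      · rintro x (hx | hx) h0
        · exfalso
          have h3 := hx.2
          rw [Metric.mem_closedBall, dist_eq_norm] at h3
          have : 0 ≤ ‖x - c‖ - 3 * ε c / 4 := nonneg_of_mul_nonneg_left h0 (by positivity)
          linarith
        · exact hx
      · intro x hx h2
        have hxS : x ∈ S := by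
          rcases hx with hx | hx
          · exact hx.1
          · simp only [Set.mem_iUnion] at hx
            obtain ⟨_, _, h⟩ := hx
            exact h.1
        refine ⟨hxS, ?_⟩
        rw [Metric.mem_closedBall, dist_eq_norm]
        have : ‖x - c‖ - 3 * ε c / 4 ≤ 2 / (8 / ε c) := by rwa [le_div_iff₀ (by positivity)]
        rw [div_div_eq_mul_div] at this
        linarith
  have := main t htS
  convert this using 1
  apply Set.Subset.antisymm
  · intro x hx
    have := hcov hx
    simp only [Set.mem_iUnion] at this ⊢
    obtain ⟨c, hc, h⟩ := this
    exact ⟨c, hc, hx, h⟩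
  · intro x hx
    simp only [Set.mem_iUnion] at hx
    obtain ⟨c, hc, h⟩ := hx
    exact h.1

end
end AFib

namespace AFib
set_option linter.unusedSectionVars false

section
variable {T E B : Type} [TopologicalSpace T] [TopologicalSpace E] 

theorem modulus {X : Type} [TopologicalSpace X] [MetricSpace B] (h : C(X × I, B)) (ε : ℝ) (hε : 0 < ε) :
    ∃ δ : C(X, ℝ), (∀ x, 0 < δ x) ∧ ∀ x (s : I), (s : ℝ) < δ x → dist (h (x, s)) (h (x, 0)) < ε := by
  let F : X → I → ℝ := fun x s => max (s : ℝ) (ε - dist (h (x, s)) (h (x, 0)))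
  have cF : Continuous (Function.uncurry F) := by
    change Continuous (fun z : X × I => max (z.2 : ℝ) (ε - dist (h z) (h (z.1, 0))))
    fun_prop
  have cFx : ∀ x, Continuous (F x) := fun x => by
    change Continuous (fun z : I => max (z : ℝ) (ε - dist (h (x, z)) (h (x, 0))))
    fun_prop
  have cD : Continuous (fun x => sInf (F x '' Set.univ)) := isCompact_univ.continuous_sInf cF
  have hb : ∀ x s, sInf (F x '' Set.univ) ≤ F x s := fun x s =>
    csInf_le (isCompact_univ.image (cFx x)).bddBelow ⟨s, trivial, rfl⟩
  refine ⟨⟨_, cD⟩, fun x => ?_, fun x s hs => ?_⟩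
  · obtain ⟨s, _, hs⟩ := (isCompact_univ.image (cFx x)).sInf_mem ⟨_, 0, trivial, rfl⟩
    simp only [ContinuousMap.coe_mk]
    rw [← hs]
    by_cases h0 : s = 0
    · subst h0; simp [F, hε]
    · exact lt_max_of_lt_left (unitInterval.pos_iff_ne_zero.2 h0)
  · have h1 := hb x s
    simp only [ContinuousMap.coe_mk] at hs
    simp only [F] at h1 hs
    rcases le_max_iff.1 h1 with h2 | h2
    · linarith
    · linarith [s.2.1]

theorem approx' [MetricSpace B] [CompactSpace B] (π : C(T, B)) (hπ : VHLP π (fun _ : B => ()))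
    (p : C(E, B)) (φ : C(T, E)) (hφ : FHE π p φ) : IsApproxFibration p := by
  refine ⟨p.continuous, ?_⟩
  intro X _ f h h0 U hU hcU
  have hφ1 : ∀ a, p (φ a) = π a := hφ.1
  obtain ⟨ψ, hψ, -, hK⟩ := hφ.exists_inv
  have hψ1 : ∀ a, π (ψ a) = p a := hψ.1
  obtain ⟨K, K0, K1, K2⟩ := hK.symm
  obtain ⟨G, hG0, hG1⟩ := hπ X (ψ.comp f) h (fun x => by simp [h0, hψ1]) (fun _ _ => rfl)
  obtain ⟨ε, hε, hL⟩ := lebesgue_number_lemma_of_metric_sUnion (isCompact_univ (X := B)) hU hcU.ge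
  obtain ⟨δ, hδ, hδ2⟩ := modulus h ε hε
  obtain ⟨H, hH1, hH2⟩ := glue2 (X := X × I) (Y := E) (fun z => (z.2 : ℝ) ≤ δ z.1 / 2)
    (fun z => δ z.1 / 2 ≤ (z.2 : ℝ)) (isClosed_le (by fun_prop) (by fun_prop))
    (isClosed_le (by fun_prop) (by fun_prop)) (fun z => le_total _ _)
    ⟨fun z => K (f z.1.1, c01 ((z.1.2 : ℝ) / (δ z.1.1 / 2))), by
      have : Continuous fun z : {z : X × I // (z.2 : ℝ) ≤ δ z.1 / 2} => (z.1.2 : ℝ) / (δ z.1.1 / 2) :=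
        Continuous.div (by fun_prop) (by fun_prop) (fun z => (half_pos (hδ _)).ne')
      fun_prop⟩
    ⟨fun z => φ (G (z.1.1, c01 (min (z.1.2 : ℝ) (2 * (z.1.2 - δ z.1.1 / 2))))), by fun_prop⟩ (by
      rintro ⟨x, t⟩ hp hq
      have e : (t : ℝ) = δ x / 2 := le_antisymm hp hq
      simp only [ContinuousMap.coe_mk]
      rw [e, div_self (half_pos (hδ x)).ne', c01_one le_rfl, K1, c01_zero (by simp), hG0]
      rfl)
  refine ⟨H, fun x => ?_, ?_⟩
  · rw [hH1 (x, 0) (by simpa using (half_pos (hδ x)).le)]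
    simp only [ContinuousMap.coe_mk]
    rw [c01_zero (by simp), K0]; rfl
  · rintro ⟨x, t⟩
    rcases lt_or_ge (t : ℝ) (δ x) with ht | ht
    · obtain ⟨u, hu, hb⟩ := hL (h (x, 0)) trivial
      refine ⟨u, hu, hb ?_, hb (hδ2 x t ht)⟩
      rcases le_total (t : ℝ) (δ x / 2) with h1 | h1
      · rw [hH1 (x, t) h1]
        simp only [ContinuousMap.coe_mk]
        rw [K2]
        simp only [ContinuousMap.id_apply]
        rw [← h0]; exact Metric.mem_ball_self hε
      · rw [hH2 (x, t) h1]
        simp only [ContinuousMap.coe_mk]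
        rw [hφ1, hG1]
        apply hδ2
        refine lt_of_le_of_lt ?_ ht
        change ((Set.projIcc 0 1 zero_le_one _ : I) : ℝ) ≤ _
        rw [Set.coe_projIcc]
        exact max_le t.2.1 ((min_le_right _ _).trans (min_le_left _ _))
    · have := hδ x
      obtain ⟨u, hu, hb⟩ := hL (h (x, t)) trivial
      refine ⟨u, hu, ?_, hb (Metric.mem_ball_self hε)⟩
      rw [hH2 (x, t) (by simp only; linarith)]
      simp only [ContinuousMap.coe_mk]
      rw [hφ1, hG1, min_eq_left (by linarith)]
      rw [show c01 (t : ℝ) = t from Set.projIcc_of_mem _ t.2]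
      exact hb (Metric.mem_ball_self hε)

theorem approx [TopologicalSpace B] [TopologicalSpace.MetrizableSpace B] [CompactSpace B]
    (π : C(T, B)) (hπ : VHLP π (fun _ : B => ()))
    (p : C(E, B)) (φ : C(T, E)) (hφ : FHE π p φ) : IsApproxFibration p := by
  let _ := TopologicalSpace.metrizableSpaceMetric B
  exact approx' π hπ p φ hφ
end

theorem FHE.he {X Y Z : Type} [TopologicalSpace X] [TopologicalSpace Y] {p : X → Z} {q : Y → Z}
    {φ : C(X, Y)} (h : FHE p q φ) : ∃ e : ContinuousMap.HomotopyEquiv X Y, e.toFun = φ := by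
  obtain ⟨-, ψ, -, ⟨k, k0, k1, -⟩, ⟨l, l0, l1, -⟩⟩ := h
  refine ⟨⟨φ, ψ, ⟨⟨k.comp ⟨fun z => (z.2, z.1), by fun_prop⟩, fun x => ?_, fun x => ?_⟩⟩,
    ⟨⟨l.comp ⟨fun z => (z.2, z.1), by fun_prop⟩, fun x => ?_, fun x => ?_⟩⟩⟩, rfl⟩
  · exact k0 x
  · exact k1 x
  · exact l0 x
  · exact l1 x

theorem main (A B : Type) [TopologicalSpace A] [TopologicalSpace B]
    (f : A → B) (hf : Continuous f)
    (hB : IsFiniteSimplicialComplex B)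
    (hfib : ∀ b : B, HomotopyEquivToFiniteComplex (HomotopyFiber f b)) :
    ∃ (E : Type) (_ : TopologicalSpace E), CompactSpace E ∧ IsENR E ∧
      ∃ (φ : ContinuousMap.HomotopyEquiv A E) (p : E → B),
        IsApproxFibration p ∧ ∀ a : A, p (φ.toFun a) = f a := by
  obtain ⟨n, K, hK, ⟨e⟩⟩ := hB
  have hS : Nice K.space := Nice.complex K hK
  let f' : C(A, B) := ⟨f, hf⟩
  let c : B → Unit := fun _ => ()
  let ι : C(B, Fin n → ℝ) := ⟨fun b => (e b).1, by fun_prop⟩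
  have hι : Function.Injective ι := fun a b h => e.injective (Subtype.ext h)
  let j : C(K.space, B) := ⟨e.symm, e.symm.continuous⟩
  have hj : ∀ x, ι (j x) = x.1 := fun x => by simp [ι, j]
  have hι' : ∀ b, ι b ∈ K.space := fun b => (e b).2
  have hG := good_all (PS.proj f' c) (PS.vhlp f' c) ι hι K.space hS j hj (by
    intro b
    obtain ⟨m, L, hL, ⟨w⟩⟩ := hfib b
    refine ⟨m, L.space, Nice.complex L hL, ⟨w.symm.trans (Homeomorph.toHomotopyEquiv ?_)⟩⟩
    exact
      { toFun := fun z => ⟨⟨z.1, z.2.1, fun _ => rfl⟩, z.2.2⟩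
        invFun := fun z => ⟨z.1.1, z.1.2.1, z.2⟩
        left_inv := fun _ => rfl
        right_inv := fun _ => rfl
        continuous_toFun := by
          apply Continuous.subtype_mk; apply Continuous.subtype_mk
          exact continuous_subtype_val
        continuous_invFun := by
          apply Continuous.subtype_mk
          exact continuous_subtype_val.comp continuous_subtype_val })
  obtain ⟨W, _, _, _, E, hEc, hE, hEA, φ, hφ⟩ := hG
  have cE : CompactSpace E := isCompact_iff_compactSpace.1 hEc
  have cB : CompactSpace B := by
    have := isCompact_iff_compactSpace.1 hS.isCompact
    exact e.symm.compactSpace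
  have mB : TopologicalSpace.MetrizableSpace B := e.isEmbedding.metrizableSpace
  let p : C(E, B) := ⟨fun z => e.symm ⟨z.1.1, hE _ z.2⟩, by fun_prop⟩
  let φ' : C(PS f' c, E) := φ.comp ⟨fun a => ⟨a, hι' _⟩, by fun_prop⟩
  have hp : ∀ z, ι (p z) = z.1.1 := fun z => by simp [ι, p]
  have hφ' : FHE (PS.proj f' c) p φ' := by
    have hφ1 : ∀ a, (φ a).1.1 = ι (PS.proj f' c a.1) := hφ.1
    obtain ⟨ψ, hψ, ⟨k1, k10, k11, k12⟩, ⟨k2, k20, k21, k22⟩⟩ := hφ.exists_inv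
    have hψ1 : ∀ z, ι (PS.proj f' c (ψ z).1) = z.1.1 := hψ.1
    refine ⟨fun a => hι ?_, ⟨fun z => (ψ z).1, by fun_prop⟩, fun z => hι ?_, 
      ⟨⟨fun w => (k1 (⟨w.1, hι' _⟩, w.2)).1, by fun_prop⟩, fun x => ?_, fun x => ?_, fun x t => hι ?_⟩, 
      ⟨k2, fun x => ?_, k21, fun x t => hι ?_⟩⟩
    · rw [hp]; exact hφ1 _
    · rw [hp]; exact hψ1 _
    · exact congrArg Subtype.val (k10 _)
    · exact congrArg Subtype.val (k11 _)
    · exact k12 ⟨x, hι' _⟩ t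
    · exact k20 x
    · rw [hp, hp]; exact k22 x t
  have hincl : FHE (fun x => c (f' x)) (fun z => c (PS.proj f' c z)) (PS.incl f' c) := by
    refine FHE.of_comp_left (χ := PS.pr f' c) ?_ (PS.pr_fhe f' c) (fun _ => rfl)
    exact FHE.of_inv _ (ContinuousMap.id A) (fun _ => rfl) (fun _ => rfl) (fun _ => rfl)
  obtain ⟨e1, he1⟩ := hincl.he
  obtain ⟨e2, he2⟩ := hφ'.he
  refine ⟨E, inferInstance, cE, ?_, e1.trans e2, p, approx (PS.proj f' c) (PS.vhlp f' c) p φ' hφ', ?_⟩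
  · have := hEA _ hS
    rw [show E ∩ {z | z.1 ∈ K.space} = E from Set.inter_eq_left.2 (fun z hz => hE z hz)] at this
    exact this.isENR hEc.isClosed
  · intro a
    change p (e2.toFun (e1.toFun a)) = f a
    rw [he1, he2, hφ'.1]
    rfl
end AFib


theorem map_factors_through_approx_fibration_with_compact_ENR_total_space
    (A B : Type) [TopologicalSpace A] [TopologicalSpace B]
    (f : A → B) (hf : Continuous f)
    (hB : IsFiniteSimplicialComplex B)
    (hfib : ∀ b : B, HomotopyEquivToFiniteComplex (HomotopyFiber f b)) :
    ∃ (E : Type) (_ : TopologicalSpace E), CompactSpace E ∧ IsENR E ∧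
      ∃ (φ : ContinuousMap.HomotopyEquiv A E) (p : E → B),
        IsApproxFibration p ∧ ∀ a : A, p (φ.toFun a) = f a := AFib.main A B f hf hB hfib

end
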